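/- arXiv:2601.22370 — 4 statements merged into one kernel-verified Lean document; each statement's English description precedes it below -/
import Mathlib

section
/- Let f : ℝⁿ → ℝ be a convex function and let t > 0, δ > 0. Assume the HJ-Prox integrals are finite. Then for every x ∈ ℝⁿ, ‖prox^δ_{tf}(x) − prox_{tf}(x)‖ ≤ √(n t δ); in particular, sup_{x ∈ ℝⁿ} ‖prox^δ_{tf}(x) − prox_{tf}(x)‖ ≤ √(n t δ). -/
open MeasureTheory Real

lemma hjprox_key {n : ℕ} (w : EuclideanSpace ℝ (Fin n) → ℝ) (c : ℝ) (hc : 0 < c)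
    (hw : ∀ y, 0 < w y) (h1 : Integrable w) (h2 : Integrable (fun y => w y • y))
    (hI : 0 < ∫ y, w y)
    (hs : ∀ s : ℝ, 0 < s → s < 1 → ∀ y, w y * (1 + c * (1 - s ^ 2) * ‖y‖ ^ 2) ≤ w (s • y)) :
    2 * c * ‖(∫ y, w y)⁻¹ • ∫ y, w y • y‖ ^ 2 ≤ n := by
  set I := ∫ y, w y with hIdef
  set m := I⁻¹ • ∫ y, w y • y with hm
  have hIm : ∫ y, w y • y = I • m := by
    rw [hm, smul_smul, mul_inv_cancel₀ hI.ne', one_smul]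
  have key : ∀ s : ℝ, 0 < s → s < 1 →
      c * ((1 + s) * ‖m‖ ^ 2) * s ^ n ≤ ∑ k ∈ Finset.range n, s ^ k := by
    intro s h0 hlt
    have hinner : Integrable (fun y => inner ℝ m (w y • y)) := h2.const_inner m
    have hc2 : 0 ≤ c * (1 - s ^ 2) := mul_nonneg hc.le (by nlinarith)
    have hint : ∫ y, (w y * (1 - c * (1 - s ^ 2) * ‖m‖ ^ 2)
        + (2 * (c * (1 - s ^ 2))) * inner ℝ m (w y • y)) ≤ ∫ y, w (s • y) := by
      apply integral_mono ((h1.mul_const _).add (hinner.const_mul _))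
        (h1.comp_smul h0.ne')
      intro y
      refine le_trans ?_ (hs s h0 hlt y)
      have h3 : 0 ≤ ‖y - m‖ ^ 2 := sq_nonneg _
      rw [norm_sub_sq_real, real_inner_comm] at h3
      have h4 := mul_nonneg (mul_nonneg (hw y).le hc2) h3
      simp only [inner_smul_right, Pi.add_apply]
      nlinarith
    rw [integral_add (h1.mul_const _) (hinner.const_mul _), integral_mul_const,
      integral_const_mul, integral_inner h2, hIm, inner_smul_right,
      real_inner_self_eq_norm_sq, Measure.integral_comp_smul, finrank_euclideanSpace_fin,
      ← hIdef, abs_of_pos (by positivity), smul_eq_mul] at hint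
    have h5 : (1 + c * (1 - s ^ 2) * ‖m‖ ^ 2) * I ≤ (s ^ n)⁻¹ * I := by linarith
    have h6 := le_of_mul_le_mul_right h5 hI
    have hsn : 0 < s ^ n := by positivity
    have h7 : (1 + c * (1 - s ^ 2) * ‖m‖ ^ 2) * s ^ n ≤ 1 := by
      calc _ ≤ (s ^ n)⁻¹ * s ^ n := by gcongr
        _ = 1 := inv_mul_cancel₀ hsn.ne'
    have h8 := mul_neg_geom_sum s n
    have h9 : (1 - s) * (c * ((1 + s) * ‖m‖ ^ 2) * s ^ n)
        ≤ (1 - s) * ∑ k ∈ Finset.range n, s ^ k := by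
      rw [h8]; linarith
    exact le_of_mul_le_mul_left h9 (by linarith)
  have hev : ∀ᶠ s in nhdsWithin (1 : ℝ) (Set.Iio 1),
      c * ((1 + s) * ‖m‖ ^ 2) * s ^ n ≤ ∑ k ∈ Finset.range n, s ^ k := by
    filter_upwards [Ioo_mem_nhdsLT (show (0 : ℝ) < 1 by norm_num)] with s h
    exact key s h.1 h.2
  have l1 : Filter.Tendsto (fun s : ℝ => c * ((1 + s) * ‖m‖ ^ 2) * s ^ n)
      (nhdsWithin (1 : ℝ) (Set.Iio 1)) (nhds (c * ((1 + 1) * ‖m‖ ^ 2) * 1 ^ n)) :=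
    (Continuous.tendsto (by fun_prop) 1).mono_left nhdsWithin_le_nhds
  have l2 : Filter.Tendsto (fun s : ℝ => ∑ k ∈ Finset.range n, s ^ k)
      (nhdsWithin (1 : ℝ) (Set.Iio 1)) (nhds (∑ k ∈ Finset.range n, 1 ^ k)) :=
    (Continuous.tendsto (f := fun s : ℝ => ∑ k ∈ Finset.range n, s ^ k)
      (by fun_prop) 1).mono_left nhdsWithin_le_nhds
  have h := le_of_tendsto_of_tendsto l1 l2 hev
  simp at h
  linarith

lemma hjprox_growth {n : ℕ} (f : EuclideanSpace ℝ (Fin n) → ℝ)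
    (hf : ConvexOn ℝ Set.univ f) (t : ℝ) (ht : 0 < t) (x p : EuclideanSpace ℝ (Fin n))
    (hp : ∀ z, f p + ‖p - x‖ ^ 2 / (2 * t) ≤ f z + ‖z - x‖ ^ 2 / (2 * t))
    (s : ℝ) (h0 : 0 < s) (hlt : s < 1) (y : EuclideanSpace ℝ (Fin n)) :
    f (s • y + p) + ‖s • y + p - x‖ ^ 2 / (2 * t) + (1 - s ^ 2) * (‖y‖ ^ 2 / (2 * t))
      ≤ f (y + p) + ‖y + p - x‖ ^ 2 / (2 * t) := by
  have step : ∀ r : ℝ, 0 < r → r < 1 →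
      f (r • y + p) + ‖r • y + p - x‖ ^ 2 / (2 * t) ≤
        r * (f (y + p) + ‖y + p - x‖ ^ 2 / (2 * t))
        + (1 - r) * (f p + ‖p - x‖ ^ 2 / (2 * t)) - r * (1 - r) * (‖y‖ ^ 2 / (2 * t)) := by
    intro r hr0 hr1
    have hcv := hf.2 (Set.mem_univ (y + p)) (Set.mem_univ p) hr0.le
      (sub_nonneg.2 hr1.le) (by ring)
    have e : r • (y + p) + (1 - r) • p = r • y + p := by module
    rw [e] at hcv
    simp only [smul_eq_mul] at hcv
    have n1 : ‖r • y + p - x‖ ^ 2 = r ^ 2 * ‖y‖ ^ 2 + 2 * (r * inner ℝ y (p - x))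
        + ‖p - x‖ ^ 2 := by
      rw [add_sub_assoc, norm_add_sq_real, norm_smul, inner_smul_left, mul_pow,
        Real.norm_eq_abs, sq_abs]
      rfl
    have n2 : ‖y + p - x‖ ^ 2 = ‖y‖ ^ 2 + 2 * inner ℝ y (p - x) + ‖p - x‖ ^ 2 := by
      rw [add_sub_assoc, norm_add_sq_real]
    rw [n1, n2]
    have : (r ^ 2 * ‖y‖ ^ 2 + 2 * (r * inner ℝ y (p - x)) + ‖p - x‖ ^ 2) / (2 * t)
      = r * ((‖y‖ ^ 2 + 2 * inner ℝ y (p - x) + ‖p - x‖ ^ 2) / (2 * t))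
        + (1 - r) * (‖p - x‖ ^ 2 / (2 * t)) - r * (1 - r) * (‖y‖ ^ 2 / (2 * t)) := by
      field_simp
      ring
    rw [this]
    linarith
  set A := f (y + p) + ‖y + p - x‖ ^ 2 / (2 * t)
  set B := f p + ‖p - x‖ ^ 2 / (2 * t)
  set b := ‖y‖ ^ 2 / (2 * t)
  have hq : b ≤ A - B := by
    have hev : ∀ᶠ r in nhdsWithin (0 : ℝ) (Set.Ioi 0), (1 - r) * b ≤ A - B := by
      filter_upwards [Ioo_mem_nhdsGT (show (0 : ℝ) < 1 by norm_num)] with r h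
      have h1 := (hp (r • y + p)).trans (step r h.1 h.2)
      have h2 : r * ((1 - r) * b) ≤ r * (A - B) := by
        change B ≤ _ at h1
        linarith
      exact le_of_mul_le_mul_left h2 h.1
    have l1 : Filter.Tendsto (fun r : ℝ => (1 - r) * b)
        (nhdsWithin (0 : ℝ) (Set.Ioi 0)) (nhds ((1 - 0) * b)) :=
      (Continuous.tendsto (by fun_prop) 0).mono_left nhdsWithin_le_nhds
    have := le_of_tendsto l1 hev
    linarith
  have h1 := step s h0 hlt
  have h2 := mul_le_mul_of_nonneg_left hq (sub_nonneg.2 hlt.le)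
  nlinarith

/-- **HJ-Prox error bound.** For a convex `f : ℝⁿ → ℝ`, `t, δ > 0`, with finite HJ-Prox
integrals, the HJ-Prox approximation is within `√(n t δ)` of the exact proximal operator,
uniformly in `x`. -/
theorem hjprox_error_bound (n : ℕ) (f : EuclideanSpace ℝ (Fin n) → ℝ)
    (hf : ConvexOn ℝ Set.univ f) (t δ : ℝ) (ht : 0 < t) (hδ : 0 < δ)
    (P : EuclideanSpace ℝ (Fin n) → EuclideanSpace ℝ (Fin n))
    (hP : ∀ x, IsMinOn (fun z => f z + ‖z - x‖ ^ 2 / (2 * t)) Set.univ (P x))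
    (hint1 : ∀ x, Integrable (fun z : EuclideanSpace ℝ (Fin n) =>
      Real.exp (-(f z + ‖z - x‖ ^ 2 / (2 * t)) / δ)))
    (hint2 : ∀ x, Integrable (fun z : EuclideanSpace ℝ (Fin n) =>
      Real.exp (-(f z + ‖z - x‖ ^ 2 / (2 * t)) / δ) • z)) :
    ∀ x : EuclideanSpace ℝ (Fin n),
      ‖(∫ z : EuclideanSpace ℝ (Fin n),
          Real.exp (-(f z + ‖z - x‖ ^ 2 / (2 * t)) / δ))⁻¹ •
        (∫ z : EuclideanSpace ℝ (Fin n),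
          Real.exp (-(f z + ‖z - x‖ ^ 2 / (2 * t)) / δ) • z) - P x‖
        ≤ Real.sqrt (n * t * δ) := by
  intro x
  have hp : ∀ z, f (P x) + ‖P x - x‖ ^ 2 / (2 * t) ≤ f z + ‖z - x‖ ^ 2 / (2 * t) :=
    fun z => hP x (Set.mem_univ z)
  set p := P x
  have i1 := hint1 x
  have i2 := hint2 x
  set w : EuclideanSpace ℝ (Fin n) → ℝ :=
    fun z => Real.exp (-(f z + ‖z - x‖ ^ 2 / (2 * t)) / δ) with hwdef
  have hI : 0 < ∫ z, w z := integral_exp_pos i1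
  have e1 : ∫ y, w (y + p) = ∫ z, w z := integral_add_right_eq_self w p
  have i3 : Integrable (fun z => w z • (z - p)) := by
    simp only [smul_sub]
    exact i2.sub (i1.smul_const p)
  have e2 : ∫ y, w (y + p) • y = (∫ z, w z • z) - (∫ z, w z) • p := by
    have := integral_add_right_eq_self (μ := volume) (fun z => w z • (z - p)) p
    simp only [add_sub_cancel_right] at this
    rw [this]
    simp only [smul_sub]
    rw [integral_sub i2 (i1.smul_const p), integral_smul_const]
  have hk := hjprox_key (fun y => w (y + p)) (1 / (2 * t * δ)) (by positivity)
    (fun y => Real.exp_pos _) (i1.comp_add_right p)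
    (by simpa using i3.comp_add_right p) (by rw [e1]; exact hI) (by
      intro s h0 hlt y
      have hg := hjprox_growth f hf t ht x p hp s h0 hlt y
      have hE : 1 + 1 / (2 * t * δ) * (1 - s ^ 2) * ‖y‖ ^ 2
          ≤ Real.exp (1 / (2 * t * δ) * (1 - s ^ 2) * ‖y‖ ^ 2) := by
        rw [add_comm]; exact Real.add_one_le_exp _
      refine (mul_le_mul_of_nonneg_left hE (Real.exp_pos _).le).trans ?_
      simp only [hwdef]
      rw [← Real.exp_add, Real.exp_le_exp]
      have e : 1 / (2 * t * δ) * (1 - s ^ 2) * ‖y‖ ^ 2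
          = ((1 - s ^ 2) * (‖y‖ ^ 2 / (2 * t))) / δ := by
        field_simp
      rw [e, ← add_div]
      apply div_le_div_of_nonneg_right _ hδ.le
      linarith)
  rw [e1, e2, smul_sub, smul_smul, inv_mul_cancel₀ hI.ne', one_smul] at hk
  apply Real.le_sqrt_of_sq_le
  have h3 : ∀ a : ℝ, 2 * (1 / (2 * t * δ)) * a = a / (t * δ) := by
    intro a; field_simp
  rw [h3, div_le_iff₀ (by positivity)] at hk
  rw [mul_assoc]
  exact hk
end

section
/- Let f : ℝⁿ → ℝ be convex, t > 0, δ > 0, x ∈ ℝⁿ, set z* = prox_{tf}(x), and define g(w) = f(z* + w) + ‖z* + w − x‖²/(2t) − f(z*) − ‖z* − x‖²/(2t). Let W be a random vector with density ρ_δ(w) proportional to exp(−g(w)/δ) (assumed normalizable). Then g is differentiable Lebesgue-almost everywhere and E[⟨W, ∇g(W)⟩] = n δ; moreover, for each coordinate j, E[W_j · ∂g/∂w_j(W)] = δ. -/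
open MeasureTheory Real
open scoped RealInnerProductSpace

lemma aux_hasDerivAt_sqmax (x : ℝ) :
    HasDerivAt (fun y : ℝ => max y 0 ^ 2) (2 * max x 0) x := by
  rcases lt_trichotomy x 0 with h | h | h
  · have : (fun y : ℝ => max y 0 ^ 2) =ᶠ[nhds x] fun _ => 0 := by
      filter_upwards [gt_mem_nhds h] with y hy
      simp [max_eq_right hy.le]
    rw [max_eq_right h.le]
    simpa using (hasDerivAt_const x (0:ℝ)).congr_of_eventuallyEq this
  · subst h
    rw [hasDerivAt_iff_isLittleO_nhds_zero]
    simp only [max_self, mul_zero, smul_zero, sub_zero, zero_add]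
    have h2 : (fun h : ℝ => h ^ 2) =o[nhds 0] fun h => h := by
      simpa using Asymptotics.isLittleO_pow_id (𝕜 := ℝ) (n := 2) (by norm_num)
    refine Asymptotics.IsBigO.trans_isLittleO ?_ h2
    refine Asymptotics.IsBigO.of_bound 1 (Filter.Eventually.of_forall fun y => ?_)
    rcases le_total y 0 with hy | hy
    · simp [max_eq_right hy]; positivity
    · simp [max_eq_left hy]
  · have : (fun y : ℝ => max y 0 ^ 2) =ᶠ[nhds x] fun y => y ^ 2 := by
      filter_upwards [lt_mem_nhds h] with y hy
      simp [max_eq_left hy.le]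
    rw [max_eq_left h.le]
    simpa using (hasDerivAt_pow 2 x).congr_of_eventuallyEq this

lemma aux_contDiff_sqmax : ContDiff ℝ 1 (fun y : ℝ => max y 0 ^ 2) := by
  rw [contDiff_one_iff_deriv]
  refine ⟨fun x => (aux_hasDerivAt_sqmax x).differentiableAt, ?_⟩
  have : deriv (fun y : ℝ => max y 0 ^ 2) = fun x => 2 * max x 0 :=
    funext fun x => (aux_hasDerivAt_sqmax x).deriv
  rw [this]; fun_prop

section
variable {E : Type*} [NormedAddCommGroup E] [InnerProductSpace ℝ E] [FiniteDimensional ℝ E]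

lemma aux_lipschitz {u : E → ℝ} (hu : LocallyLipschitz u) (hc : HasCompactSupport u) :
    ∃ K, LipschitzWith K u := by
  obtain ⟨S, hS⟩ := hc.isCompact.isBounded.subset_closedBall 0
  have hz : ∀ x, x ∉ Metric.closedBall (0:E) S → u x = 0 := fun x hx => by
    by_contra h
    exact hx (hS (subset_tsupport _ h))
  obtain ⟨K, hK⟩ := (hu.locallyLipschitzOn (s := Metric.closedBall (0:E) (S+1))).exists_lipschitzOnWith_of_compact
    (isCompact_closedBall _ _)
  obtain ⟨M, hM⟩ := hu.continuous.bounded_above_of_compact_support hc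
  have hM0 : 0 ≤ M := (norm_nonneg _).trans (hM 0)
  refine ⟨K + M.toNNReal, LipschitzWith.of_dist_le_mul ?_⟩
  have key : ∀ x y, ‖x‖ ≤ ‖y‖ → dist (u x) (u y) ≤ (K + M) * dist x y := by
    intro x y hxy
    by_cases hy : y ∈ Metric.closedBall (0:E) (S+1)
    · have hx : x ∈ Metric.closedBall (0:E) (S+1) := by
        simp only [mem_closedBall_zero_iff] at *; linarith
      have := hK.dist_le_mul x hx y hy
      have : 0 ≤ M * dist x y := by positivity
      linarith
    · have hy0 : u y = 0 := hz y fun h => hy (Metric.closedBall_subset_closedBall (by linarith) h)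
      by_cases hx : x ∈ Metric.closedBall (0:E) S
      · have h1 : 1 ≤ dist x y := by
          simp only [mem_closedBall_zero_iff, not_le] at *
          have := norm_sub_norm_le y x
          rw [dist_comm, dist_eq_norm]; linarith
        have h2 := hM x
        have h3 : 0 ≤ (K:ℝ) * dist x y := by positivity
        rw [hy0, dist_zero_right]
        nlinarith
      · rw [hy0, hz x hx, dist_self]; positivity
  intro x y
  rw [NNReal.coe_add, Real.coe_toNNReal _ hM0]
  rcases le_total ‖x‖ ‖y‖ with h | h
  · exact key x y h
  · rw [dist_comm, dist_comm x]; exact key y x h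

variable [MeasurableSpace E] [BorelSpace E]

lemma aux_ae_diff {G : E → ℝ} (hG : LocallyLipschitz G) :
    ∀ᵐ w : E, DifferentiableAt ℝ G w := by
  have : ∀ N : ℕ, ∀ᵐ w : E, w ∈ Metric.ball (0:E) N → DifferentiableAt ℝ G w := by
    intro N
    obtain ⟨K, hK⟩ := (hG.locallyLipschitzOn (s := Metric.closedBall (0:E) N)).exists_lipschitzOnWith_of_compact
      (isCompact_closedBall _ _)
    filter_upwards [hK.ae_differentiableWithinAt_of_mem (μ := volume)] with w hw hwN
    exact (hw (Metric.ball_subset_closedBall hwN)).differentiableAt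
      (Filter.mem_of_superset (Metric.isOpen_ball.mem_nhds hwN) Metric.ball_subset_closedBall)
  rw [← ae_all_iff] at this
  filter_upwards [this] with w hw
  obtain ⟨N, hN⟩ := exists_nat_gt ‖w‖
  exact hw N (by simpa using hN)

lemma aux_ibp {G p : E → ℝ} {Φ : ℝ → ℝ} (hG : LocallyLipschitz G) (hp : ContDiff ℝ 1 p)
    (hΦ : ContDiff ℝ 1 Φ) (hc : HasCompactSupport (fun w => Φ (G w))) (v : E) :
    Integrable (fun w => fderiv ℝ p w v * Φ (G w)) ∧
    Integrable (fun w => p w * (deriv Φ (G w) * fderiv ℝ G w v)) ∧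
    ∫ w, p w * (deriv Φ (G w) * fderiv ℝ G w v) = - ∫ w, fderiv ℝ p w v * Φ (G w) := by
  set u : E → ℝ := fun w => p w * Φ (G w) with hu
  have huL : LocallyLipschitz u := by
    have h1 : LocallyLipschitz (fun q : ℝ × ℝ => q.1 * Φ q.2) :=
      ContDiff.locallyLipschitz (𝕂 := ℝ) (by fun_prop)
    exact h1.comp (hp.locallyLipschitz.prodMk hG)
  have huc : HasCompactSupport u := hc.mul_left
  obtain ⟨K, hK⟩ := aux_lipschitz huL huc
  have h0 : ∫ w, lineDeriv ℝ u w v = 0 := by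
    have := (LipschitzWith.const (1:ℝ)).integral_lineDeriv_mul_eq (μ := (volume : Measure E)) hK huc (-v)
    simpa [lineDeriv] using this.symm
  have hae : (fun w => lineDeriv ℝ u w v) =ᵐ[volume]
      fun w => fderiv ℝ p w v * Φ (G w) + p w * (deriv Φ (G w) * fderiv ℝ G w v) := by
    filter_upwards [aux_ae_diff hG] with w hw
    have h1 : HasFDerivAt (fun w => Φ (G w)) (deriv Φ (G w) • fderiv ℝ G w) w :=
      ((hΦ.differentiable (by norm_num)) (G w)).hasDerivAt.comp_hasFDerivAt w hw.hasFDerivAt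
    have h2 : HasFDerivAt u _ w := ((hp.differentiable (by norm_num)) w).hasFDerivAt.mul h1
    rw [(h2.hasLineDerivAt v).lineDeriv]
    simp; ring
  have hi0 : Integrable (fun w => lineDeriv ℝ u w v) := by
    have hl := hK.locallyIntegrable_lineDeriv (μ := (volume : Measure E)) v
    have := hl.integrableOn_isCompact huc.isCompact
    rw [integrableOn_iff_integrable_of_support_subset] at this
    · exact this
    · intro w hw
      by_contra h
      apply hw
      have : u =ᶠ[nhds w] fun _ => 0 := notMem_tsupport_iff_eventuallyEq.mp h
      show lineDeriv ℝ u w v = 0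
      rw [this.lineDeriv_eq]; simp [lineDeriv]
  have hi1 : Integrable (fun w => fderiv ℝ p w v * Φ (G w)) := by
    refine Continuous.integrable_of_hasCompactSupport ?_ hc.mul_left
    exact ((hp.continuous_fderiv (by norm_num)).clm_apply continuous_const).mul
      (hΦ.continuous.comp hG.continuous)
  have hi2 : Integrable (fun w => p w * (deriv Φ (G w) * fderiv ℝ G w v)) := by
    have := (hi0.congr hae).sub hi1
    refine this.congr (Filter.Eventually.of_forall fun w => ?_)
    simp
  refine ⟨hi1, hi2, ?_⟩
  have := integral_congr_ae hae
  rw [h0, integral_add hi1 hi2] at this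
  linarith

lemma aux_convex {G : E → ℝ} (hG : ConvexOn ℝ Set.univ G) {w : E} (hw : DifferentiableAt ℝ G w)
    (u : E) : fderiv ℝ G w (u - w) ≤ G u - G w := by
  have h1 : ConvexOn ℝ Set.univ (fun s : ℝ => G (AffineMap.lineMap w u s)) := by
    exact hG.comp_affineMap (AffineMap.lineMap (k := ℝ) w u)
  have h2 : HasDerivAt (fun s : ℝ => G (AffineMap.lineMap w u s)) (fderiv ℝ G w (u - w)) 0 := by
    have h3 : HasFDerivAt G (fderiv ℝ G w) (AffineMap.lineMap w u (0:ℝ)) := by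
      simpa using hw.hasFDerivAt
    exact h3.comp_hasDerivAt (0:ℝ) AffineMap.hasDerivAt_lineMap
  have := h1.le_slope_of_hasDerivAt (Set.mem_univ _) (Set.mem_univ _) zero_lt_one h2
  simpa [slope_def_field] using this

end

section
variable {E : Type*} [NormedAddCommGroup E] [InnerProductSpace ℝ E] [FiniteDimensional ℝ E]
  [MeasurableSpace E] [BorelSpace E]

lemma aux_gauss {b : ℝ} (hb : 0 < b) :
    Integrable (fun w : E => (1 + ‖w‖ ^ 2) * Real.exp (-b * ‖w‖ ^ 2)) := by
  have h1 : Integrable (fun w : E => Real.exp (-(b / 2) * ‖w‖ ^ 2)) := by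
    have := GaussianFourier.integrable_cexp_neg_mul_sq_norm_add (V := E) (b := ((b / 2 : ℝ) : ℂ))
      (by simpa using hb) 0 0
    refine this.norm.congr (Filter.Eventually.of_forall fun w => ?_)
    simp only [Complex.norm_exp]
    congr 1
    rw [zero_mul, add_zero, ← Complex.ofReal_neg, ← Complex.ofReal_pow, ← Complex.ofReal_mul,
      Complex.ofReal_re]
  refine (h1.const_mul (1 + 2 / b)).mono' (by fun_prop) (Filter.Eventually.of_forall fun w => ?_)
  rw [Real.norm_of_nonneg (by positivity)]
  have h2 : Real.exp (-b * ‖w‖ ^ 2) = Real.exp (-(b / 2) * ‖w‖ ^ 2) * Real.exp (-(b / 2) * ‖w‖ ^ 2) := by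
    rw [← Real.exp_add]; ring_nf
  rw [h2, ← mul_assoc]
  gcongr
  have h3 := Real.add_one_le_exp (b / 2 * ‖w‖ ^ 2)
  have h4 : 1 + ‖w‖ ^ 2 ≤ (1 + 2 / b) * Real.exp (b / 2 * ‖w‖ ^ 2) := by
    calc 1 + ‖w‖ ^ 2 ≤ (1 + 2 / b) * (b / 2 * ‖w‖ ^ 2 + 1) := by
          have : (1 + 2 / b) * (b / 2 * ‖w‖ ^ 2 + 1) = 1 + ‖w‖ ^ 2 + 2 / b + b / 2 * ‖w‖ ^ 2 := by
            field_simp; ring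
          rw [this]
          have : 0 ≤ 2 / b + b / 2 * ‖w‖ ^ 2 := by positivity
          linarith
      _ ≤ _ := by gcongr
  calc (1 + ‖w‖ ^ 2) * Real.exp (-(b / 2) * ‖w‖ ^ 2)
      ≤ (1 + 2 / b) * Real.exp (b / 2 * ‖w‖ ^ 2) * Real.exp (-(b / 2) * ‖w‖ ^ 2) := by gcongr
    _ = 1 + 2 / b := by rw [mul_assoc, ← Real.exp_add]; simp

lemma aux_ibp2 {G p : E → ℝ} (hG : LocallyLipschitz G) (hp : ContDiff ℝ 1 p) {a δ ε : ℝ}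
    (ha : 0 < a) (hδ : 0 < δ) (hε : 0 < ε) (hGa : ∀ w, a * ‖w‖ ^ 2 ≤ G w) (v : E) :
    Integrable (fun w => fderiv ℝ p w v * max (Real.exp (-G w / (2 * δ)) - ε) 0 ^ 2) ∧
    Integrable (fun w => p w * fderiv ℝ G w v *
      (Real.exp (-G w / (2 * δ)) * max (Real.exp (-G w / (2 * δ)) - ε) 0)) ∧
    ∫ w, p w * fderiv ℝ G w v *
      (Real.exp (-G w / (2 * δ)) * max (Real.exp (-G w / (2 * δ)) - ε) 0) =
      δ * ∫ w, fderiv ℝ p w v * max (Real.exp (-G w / (2 * δ)) - ε) 0 ^ 2 := by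
  set Φ : ℝ → ℝ := fun s => max (Real.exp (-s / (2 * δ)) - ε) 0 ^ 2 with hΦdef
  have hΦ : ContDiff ℝ 1 Φ := by
    have : ContDiff ℝ 1 (fun s : ℝ => Real.exp (-s / (2 * δ)) - ε) := by fun_prop
    exact aux_contDiff_sqmax.comp this
  have hd : ∀ s, deriv Φ s = -(1 / δ) * (Real.exp (-s / (2 * δ)) * max (Real.exp (-s / (2 * δ)) - ε) 0) := by
    intro s
    have h1 : HasDerivAt (fun s : ℝ => Real.exp (-s / (2 * δ)) - ε)
        (Real.exp (-s / (2 * δ)) * (-1 / (2 * δ))) s :=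
      (((hasDerivAt_id s).neg.div_const (2 * δ)).exp).sub_const ε
    have h2 : HasDerivAt Φ _ s := (aux_hasDerivAt_sqmax _).comp s h1
    rw [h2.deriv]
    field_simp
  have hc : HasCompactSupport (fun w => Φ (G w)) := by
    refine HasCompactSupport.intro (isCompact_closedBall (0:E) (max 1 (2 * δ / (a * ε)))) ?_
    intro w hw
    simp only [mem_closedBall_zero_iff, not_le, max_lt_iff] at hw
    have h1 : 2 * δ / (a * ε) < ‖w‖ ^ 2 := by nlinarith [hw.1, hw.2]
    have h2 : 1 / ε ≤ G w / (2 * δ) := by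
      rw [div_lt_iff₀ (by positivity)] at h1
      rw [div_le_div_iff₀ hε (by positivity)]
      nlinarith [hGa w]
    have h3 : Real.exp (-G w / (2 * δ)) ≤ ε := by
      rw [neg_div, Real.exp_neg]
      apply inv_le_of_inv_le₀ hε
      have := Real.add_one_le_exp (G w / (2 * δ))
      rw [one_div] at h2
      linarith
    simp only [hΦdef]
    rw [max_eq_right (by linarith)]; norm_num
  obtain ⟨i1, i2, h⟩ := aux_ibp hG hp hΦ hc v
  have hfun : ∀ w, p w * fderiv ℝ G w v *
      (Real.exp (-G w / (2 * δ)) * max (Real.exp (-G w / (2 * δ)) - ε) 0) =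
      -δ * (p w * (deriv Φ (G w) * fderiv ℝ G w v)) := by
    intro w; rw [hd]; field_simp
  refine ⟨i1, ?_, ?_⟩
  · simp_rw [hfun]; exact i2.const_mul _
  · simp_rw [hfun]; rw [integral_const_mul, h]; ring

end

lemma aux_core {n : ℕ} {G : EuclideanSpace ℝ (Fin n) → ℝ} (hconv : ConvexOn ℝ Set.univ G)
    (hG0 : G 0 = 0) {a δ : ℝ} (ha : 0 < a) (hδ : 0 < δ) (hGa : ∀ w, a * ‖w‖ ^ 2 ≤ G w)
    (hL : LocallyLipschitz G) (j : Fin n) :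
    Integrable (fun w => w j * fderiv ℝ G w (EuclideanSpace.single j 1) * Real.exp (-G w / δ)) ∧
    ∫ w, w j * fderiv ℝ G w (EuclideanSpace.single j 1) * Real.exp (-G w / δ) =
      δ * ∫ w, Real.exp (-G w / δ) := by
  have hGc := hL.continuous
  set e : EuclideanSpace ℝ (Fin n) → ℝ := fun w => Real.exp (-G w / (2 * δ)) with he
  have hec : Continuous e := by fun_prop
  have hepos : ∀ w, 0 < e w := fun w => Real.exp_pos _
  have hee : ∀ w, Real.exp (-G w / δ) = e w * e w := by
    intro w; simp only [he]; rw [← Real.exp_add]; congr 1; field_simp; ring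
  simp_rw [hee]
  set A : ℕ → EuclideanSpace ℝ (Fin n) → ℝ := fun k w => max (e w - 1 / ((k:ℝ) + 1)) 0 with hA
  have hA0 : ∀ k w, 0 ≤ A k w := fun k w => le_max_right _ _
  have hAe : ∀ k w, A k w ≤ e w := fun k w => max_le (by
    have : 0 < 1 / ((k:ℝ) + 1) := by positivity
    linarith) (hepos w).le
  have hAc : ∀ k, Continuous (A k) := fun k => by fun_prop
  have hAt : ∀ w, Filter.Tendsto (fun k => A k w) Filter.atTop (nhds (e w)) := by
    intro w
    have h1 : Filter.Tendsto (fun k : ℕ => max (e w - 1 / ((k:ℝ) + 1)) 0) Filter.atTop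
        (nhds (max (e w - 0) 0)) :=
      (tendsto_const_nhds.sub tendsto_one_div_add_atTop_nhds_zero_nat).max tendsto_const_nhds
    rwa [sub_zero, max_eq_left (hepos w).le] at h1
  have hk : ∀ k : ℕ, 0 < 1 / ((k:ℝ) + 1) := fun k => by positivity
  -- weight integrability
  have hI : Integrable (fun w => (1 + ‖w‖ ^ 2) * (e w * e w)) := by
    refine (aux_gauss (E := EuclideanSpace ℝ (Fin n)) (b := a / δ) (by positivity)).mono'
      (by fun_prop) (Filter.Eventually.of_forall fun w => ?_)
    rw [Real.norm_of_nonneg (by have := hepos w; positivity), ← hee]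
    gcongr
    rw [div_le_iff₀ hδ]
    have := hGa w
    have : -(a / δ) * ‖w‖ ^ 2 * δ = -(a * ‖w‖ ^ 2) := by field_simp
    linarith
  have hI1 : Integrable (fun w => e w * e w) := by
    refine hI.mono' (by fun_prop) (Filter.Eventually.of_forall fun w => ?_)
    rw [Real.norm_of_nonneg (by have := hepos w; positivity)]
    have : 0 ≤ ‖w‖ ^ 2 * (e w * e w) := by have := hepos w; positivity
    linarith
  have hfm : ∀ v, Measurable (fun w => fderiv ℝ G w v) := fun v =>
    measurable_fderiv_apply_const ℝ G v
  set D : EuclideanSpace ℝ (Fin n) → ℝ := fun w => fderiv ℝ G w w with hD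
  have hDsum : ∀ w, D w = ∑ i, w i * fderiv ℝ G w (EuclideanSpace.single i 1) := by
    intro w
    have : w = ∑ i, w i • EuclideanSpace.single i (1:ℝ) := by
      have := (EuclideanSpace.basisFun (Fin n) ℝ).sum_repr w
      simpa using this.symm
    have h2 := congrArg (fderiv ℝ G w) this
    rw [map_sum] at h2
    simp only [hD]
    rw [h2]
    refine Finset.sum_congr rfl fun i _ => ?_
    rw [map_smul, smul_eq_mul]
  have hDm : Measurable D := by
    have : D = fun w => ∑ i, w i * fderiv ℝ G w (EuclideanSpace.single i 1) := funext hDsum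
    rw [this]
    refine Finset.measurable_sum _ fun i _ => ?_
    exact (by fun_prop : Continuous fun w : EuclideanSpace ℝ (Fin n) => w i).measurable.mul (hfm _)
  have hGnn : ∀ w, 0 ≤ G w := fun w => le_trans (by positivity) (hGa w)
  have hcv : ∀ w u, fderiv ℝ G w u ≤ D w + G u := by
    intro w u
    by_cases hw : DifferentiableAt ℝ G w
    · have := aux_convex hconv hw u
      rw [map_sub] at this
      have := hGnn w
      simp only [hD]; linarith
    · simp only [hD, fderiv_zero_of_not_differentiableAt hw]
      simpa using hGnn u
  have hD0 : ∀ w, 0 ≤ D w := by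
    intro w
    have := hcv w 0
    rw [hG0] at this; simpa using this
  -- step 2
  have hI2 : Integrable (fun w => (1 + ‖w‖ ^ 2) * D w * (e w * e w)) := by
    set M : ℝ := ∫ w, 3 * ((1 + ‖w‖ ^ 2) * (e w * e w)) with hM
    have hb : ∀ k, Integrable (fun w => (1 + ‖w‖ ^ 2) * D w * (e w * A k w)) ∧
        ∫ w, (1 + ‖w‖ ^ 2) * D w * (e w * A k w) ≤ n * (δ * M) := by
      intro k
      have hp : ∀ i : Fin n, ContDiff ℝ 1
          (fun w : EuclideanSpace ℝ (Fin n) => (1 + ‖w‖ ^ 2) * w i) := fun i =>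
        (contDiff_const.add (contDiff_norm_sq ℝ)).mul (by fun_prop)
      have hx := fun i => aux_ibp2 hL (hp i) ha hδ (hk k) hGa (EuclideanSpace.single i 1)
      have hs : (fun w => (1 + ‖w‖ ^ 2) * D w * (e w * A k w)) = fun w => ∑ i,
          ((1 + ‖w‖ ^ 2) * w i) * fderiv ℝ G w (EuclideanSpace.single i 1) * (e w * A k w) := by
        funext w
        rw [hDsum, Finset.mul_sum, Finset.sum_mul]
        refine Finset.sum_congr rfl fun i _ => by ring
      rw [hs]
      refine ⟨integrable_finsetSum _ fun i _ => (hx i).2.1, ?_⟩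
      rw [integral_finsetSum _ fun i _ => (hx i).2.1]
      have : ∀ i ∈ Finset.univ, ∫ w, ((1 + ‖w‖ ^ 2) * w i) * fderiv ℝ G w (EuclideanSpace.single i 1) * (e w * A k w) ≤ δ * M := by
        intro i _
        refine (hx i).2.2.le.trans ?_
        refine mul_le_mul_of_nonneg_left ?_ hδ.le
        refine integral_mono (hx i).1 (hI.const_mul 3) fun w => ?_
        have hd : fderiv ℝ (fun w : EuclideanSpace ℝ (Fin n) => (1 + ‖w‖ ^ 2) * w i) w
            (EuclideanSpace.single i 1) = 2 * (w i) ^ 2 + (1 + ‖w‖ ^ 2) := by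
          have h1 : HasFDerivAt (fun w : EuclideanSpace ℝ (Fin n) => 1 + ‖w‖ ^ 2) _ w :=
            ((hasStrictFDerivAt_norm_sq w).hasFDerivAt).const_add 1
          have h2 : HasFDerivAt (fun w : EuclideanSpace ℝ (Fin n) => w i) _ w :=
            (EuclideanSpace.proj (𝕜 := ℝ) i : EuclideanSpace ℝ (Fin n) →L[ℝ] ℝ).hasFDerivAt
          have h12 : HasFDerivAt (fun w : EuclideanSpace ℝ (Fin n) => (1 + ‖w‖ ^ 2) * w i) _ w := h1.mul h2
          rw [h12.fderiv]
          simp [EuclideanSpace.inner_single_right]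
          ring
        have hwi : (w i) ^ 2 ≤ ‖w‖ ^ 2 := by
          have := PiLp.norm_apply_le w i
          rw [Real.norm_eq_abs] at this
          exact sq_le_sq' (by linarith [neg_abs_le (w i)]) ((le_abs_self _).trans this)
        have h3 : A k w ^ 2 ≤ e w * e w := by
          rw [sq]; exact mul_le_mul (hAe k w) (hAe k w) (hA0 k w) (hepos w).le
        show fderiv ℝ (fun w : EuclideanSpace ℝ (Fin n) => (1 + ‖w‖ ^ 2) * w i) w
            (EuclideanSpace.single i 1) * A k w ^ 2 ≤ 3 * ((1 + ‖w‖ ^ 2) * (e w * e w))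
        rw [hd, ← mul_assoc]
        refine mul_le_mul (by linarith) h3 (sq_nonneg _) (by positivity)
      refine (Finset.sum_le_sum this).trans ?_
      simp
    have hnn : ∀ k w, 0 ≤ (1 + ‖w‖ ^ 2) * D w * (e w * A k w) := fun k w =>
      mul_nonneg (mul_nonneg (by positivity) (hD0 w)) (mul_nonneg (hepos w).le (hA0 k w))
    have hnn2 : ∀ w, 0 ≤ (1 + ‖w‖ ^ 2) * D w * (e w * e w) := fun w =>
      mul_nonneg (mul_nonneg (by positivity) (hD0 w)) (mul_nonneg (hepos w).le (hepos w).le)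
    have hmeas : ∀ k, Measurable fun w => (1 + ‖w‖ ^ 2) * D w * (e w * A k w) := fun k =>
      ((by fun_prop : Continuous fun w : EuclideanSpace ℝ (Fin n) => 1 + ‖w‖ ^ 2).measurable.mul hDm).mul
        (hec.mul (hAc k)).measurable
    refine ⟨(((by fun_prop : Continuous fun w : EuclideanSpace ℝ (Fin n) => 1 + ‖w‖ ^ 2).measurable.mul hDm).mul
        (hec.mul hec).measurable).aestronglyMeasurable, ?_⟩
    rw [hasFiniteIntegral_iff_ofReal (Filter.Eventually.of_forall hnn2)]
    have hlim : ∀ w, Filter.liminf (fun k => ENNReal.ofReal ((1 + ‖w‖ ^ 2) * D w * (e w * A k w)))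
          Filter.atTop = ENNReal.ofReal ((1 + ‖w‖ ^ 2) * D w * (e w * e w)) := fun w =>
      Filter.Tendsto.liminf_eq (ENNReal.tendsto_ofReal
        (((hAt w).const_mul (e w)).const_mul ((1 + ‖w‖ ^ 2) * D w)))
    calc ∫⁻ w, ENNReal.ofReal ((1 + ‖w‖ ^ 2) * D w * (e w * e w))
        = ∫⁻ w, Filter.liminf (fun k => ENNReal.ofReal ((1 + ‖w‖ ^ 2) * D w * (e w * A k w))) Filter.atTop := by simp_rw [hlim]
      _ ≤ Filter.liminf (fun k => ∫⁻ w, ENNReal.ofReal ((1 + ‖w‖ ^ 2) * D w * (e w * A k w))) Filter.atTop := lintegral_liminf_le fun k => (hmeas k).ennreal_ofReal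
      _ ≤ ENNReal.ofReal (n * (δ * M)) := by
        refine Filter.liminf_le_of_le (by isBoundedDefault) ?_
        intro b hb'
        obtain ⟨k, hk'⟩ := hb'.exists
        refine hk'.trans ?_
        rw [← ofReal_integral_eq_lintegral_ofReal (hb k).1 (Filter.Eventually.of_forall (hnn k))]
        exact ENNReal.ofReal_le_ofReal (hb k).2
      _ < ⊤ := ENNReal.ofReal_lt_top
  -- step 3
  set C : ℝ := G (EuclideanSpace.single j 1) + G (-EuclideanSpace.single j 1) with hC
  have hbd : ∀ w, |w j * fderiv ℝ G w (EuclideanSpace.single j 1)| ≤ (1 + ‖w‖ ^ 2) * (D w + C) := by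
    intro w
    rw [abs_mul]
    have h1 : |w j| ≤ 1 + ‖w‖ ^ 2 := by
      have := PiLp.norm_apply_le w j
      rw [Real.norm_eq_abs] at this
      nlinarith [sq_nonneg (‖w‖ - 1), norm_nonneg w]
    have h2 : |fderiv ℝ G w (EuclideanSpace.single j 1)| ≤ D w + C := by
      have a1 := hcv w (EuclideanSpace.single j 1)
      have a2 := hcv w (-EuclideanSpace.single j 1)
      rw [map_neg] at a2
      have b1 := hGnn (EuclideanSpace.single j 1)
      have b2 := hGnn (-EuclideanSpace.single j 1)
      rw [abs_le]; constructor <;> linarith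
    exact mul_le_mul h1 h2 (abs_nonneg _) (by positivity)
  have hB : Integrable (fun w => (1 + ‖w‖ ^ 2) * (D w + C) * (e w * e w)) := by
    refine (hI2.add (hI.const_mul C)).congr (Filter.Eventually.of_forall fun w => ?_)
    simp only [Pi.add_apply]; ring
  have hjm : Measurable fun w => w j * fderiv ℝ G w (EuclideanSpace.single j 1) :=
    (by fun_prop : Continuous fun w : EuclideanSpace ℝ (Fin n) => w j).measurable.mul (hfm _)
  have hbd2 : ∀ w y, 0 ≤ y → y ≤ e w → ‖w j * fderiv ℝ G w (EuclideanSpace.single j 1) * (e w * y)‖ ≤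
      (1 + ‖w‖ ^ 2) * (D w + C) * (e w * e w) := by
    intro w y hy hye
    rw [norm_mul, Real.norm_of_nonneg (mul_nonneg (hepos w).le hy)]
    exact mul_le_mul (hbd w) (mul_le_mul_of_nonneg_left hye (hepos w).le)
      (mul_nonneg (hepos w).le hy) ((abs_nonneg _).trans (hbd w))
  refine ⟨hB.mono' (hjm.mul (hec.mul hec).measurable).aestronglyMeasurable
    (Filter.Eventually.of_forall fun w => hbd2 w _ (hepos w).le le_rfl), ?_⟩
  have t1 : Filter.Tendsto (fun k => ∫ w, w j * fderiv ℝ G w (EuclideanSpace.single j 1) * (e w * A k w))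
      Filter.atTop (nhds (∫ w, w j * fderiv ℝ G w (EuclideanSpace.single j 1) * (e w * e w))) := by
    refine tendsto_integral_of_dominated_convergence _
      (fun k => (hjm.mul (hec.mul (hAc k)).measurable).aestronglyMeasurable) hB
      (fun k => Filter.Eventually.of_forall fun w => hbd2 w _ (hA0 k w) (hAe k w))
      (Filter.Eventually.of_forall fun w => ((hAt w).const_mul (e w)).const_mul _)
  have t2 : Filter.Tendsto (fun k => δ * ∫ w, A k w ^ 2)
      Filter.atTop (nhds (δ * ∫ w, e w * e w)) := by
    refine Filter.Tendsto.const_mul δ ?_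
    refine tendsto_integral_of_dominated_convergence _
      (fun k => ((hAc k).pow 2).aestronglyMeasurable) hI1
      (fun k => Filter.Eventually.of_forall fun w => ?_)
      (Filter.Eventually.of_forall fun w => ?_)
    · rw [Real.norm_of_nonneg (sq_nonneg _), sq]
      exact mul_le_mul (hAe k w) (hAe k w) (hA0 k w) (hepos w).le
    · have := (hAt w).pow 2
      rwa [sq (e w)] at this
  refine tendsto_nhds_unique t1 (t2.congr fun k => ?_)
  have hpj : ContDiff ℝ 1 (fun w : EuclideanSpace ℝ (Fin n) => w j) := by fun_prop
  have := (aux_ibp2 hL hpj ha hδ (hk k) hGa (EuclideanSpace.single j 1)).2.2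
  have hd : ∀ w, fderiv ℝ (fun w : EuclideanSpace ℝ (Fin n) => w j) w (EuclideanSpace.single j 1) = 1 := by
    intro w
    have h2 : HasFDerivAt (fun w : EuclideanSpace ℝ (Fin n) => w j) _ w :=
      (EuclideanSpace.proj (𝕜 := ℝ) j : EuclideanSpace ℝ (Fin n) →L[ℝ] ℝ).hasFDerivAt
    rw [h2.fderiv]; simp
  simp only [hd, one_mul] at this
  exact this.symm

/-- **Integration-by-parts identity for the recentered proximal objective.**
With `g(w) = φ_x(z* + w) − φ_x(z*)` and `W` distributed with density proportional
to `exp(−g(w)/δ)`, `g` is differentiable a.e. and `E[⟨W, ∇g(W)⟩] = nδ`, with each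
coordinate contributing `δ`. -/
theorem gibbs_inner_grad_identity (n : ℕ) (f : EuclideanSpace ℝ (Fin n) → ℝ)
    (hf : ConvexOn ℝ Set.univ f) (t δ : ℝ) (ht : 0 < t) (hδ : 0 < δ)
    (x zstar : EuclideanSpace ℝ (Fin n))
    (hz : IsMinOn (fun z => f z + ‖z - x‖ ^ 2 / (2 * t)) Set.univ zstar)
    (G : EuclideanSpace ℝ (Fin n) → ℝ)
    (hG : G = fun w => f (zstar + w) + ‖zstar + w - x‖ ^ 2 / (2 * t)
      - f zstar - ‖zstar - x‖ ^ 2 / (2 * t))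
    (c : ℝ) (hc : 0 < c)
    (ρ : Measure (EuclideanSpace ℝ (Fin n)))
    (hρ : ρ = volume.withDensity fun w => ENNReal.ofReal (c * Real.exp (-G w / δ)))
    (hprob : IsProbabilityMeasure ρ) :
    (∀ᵐ w : EuclideanSpace ℝ (Fin n), DifferentiableAt ℝ G w) ∧
    (∫ w, ⟪w, gradient G w⟫ ∂ρ = n * δ) ∧
    (∀ j : Fin n, ∫ w, w j * gradient G w j ∂ρ = δ) := by
  set H : EuclideanSpace ℝ (Fin n) → ℝ := fun w => f (zstar + w) - f zstar + ⟪zstar - x, w⟫ / t with hH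
  have hGH : ∀ w, G w = H w + ‖w‖ ^ 2 / (2 * t) := by
    intro w
    have h1 : ‖zstar + w - x‖ ^ 2 = ‖zstar - x‖ ^ 2 + 2 * ⟪zstar - x, w⟫ + ‖w‖ ^ 2 := by
      rw [← norm_add_sq_real]; congr 2; abel
    rw [hG]; simp only [hH]; rw [h1]; field_simp; ring
  have hHc : ConvexOn ℝ Set.univ H := by
    have h1 : ConvexOn ℝ Set.univ (fun w => f (zstar + w)) := by
      have := hf.translate_right zstar
      simpa [Function.comp_def] using this
    have h2 : ConvexOn ℝ Set.univ (fun w => ⟪zstar - x, w⟫ / t) := by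
      refine ⟨convex_univ, fun u _ v _ a b _ _ _ => le_of_eq ?_⟩
      simp only [inner_add_right, inner_smul_right, smul_eq_mul]
      ring
    exact (h1.sub (concaveOn_const (f zstar) convex_univ)).add h2
  have hGc : ConvexOn ℝ Set.univ G := by
    have h1 : ConvexOn ℝ Set.univ (fun w : EuclideanSpace ℝ (Fin n) => (1 / (2 * t)) • ‖w‖ ^ 2) :=
      (convexOn_univ_norm.pow (fun _ _ => norm_nonneg _) 2).smul (by positivity)
    have h2 : G = H + (fun w : EuclideanSpace ℝ (Fin n) => (1 / (2 * t)) • ‖w‖ ^ 2) := by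
      funext w
      rw [hGH, Pi.add_apply, smul_eq_mul]; ring
    rw [h2]; exact hHc.add h1
  have hG0 : G 0 = 0 := by rw [hG]; simp
  have hH0 : H 0 = 0 := by simp [hH]
  have hGnn : ∀ w, 0 ≤ G w := by
    intro w
    have := hz (Set.mem_univ (zstar + w))
    simp only [Set.mem_ofPred_eq] at this
    rw [hG]; simp only; linarith
  have hGa : ∀ w, 1 / (2 * t) * ‖w‖ ^ 2 ≤ G w := by
    intro w
    have hHnn : 0 ≤ H w := by
      set q := ‖w‖ ^ 2 / (2 * t) with hq
      have key : ∀ s : ℝ, 0 < s → s ≤ 1 → -(s * q) ≤ H w := by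
        intro s hs hs1
        have h1 := hHc.2 (Set.mem_univ w) (Set.mem_univ 0) hs.le (sub_nonneg.2 hs1) (by ring)
        simp only [smul_zero, add_zero, hH0, smul_eq_mul] at h1
        have h2 := hGnn (s • w)
        rw [hGH, norm_smul, mul_pow, Real.norm_eq_abs, sq_abs] at h2
        have h3 : s ^ 2 * ‖w‖ ^ 2 / (2 * t) = s * (s * q) := by rw [hq]; ring
        rw [h3] at h2
        have : 0 ≤ s * (H w + s * q) := by linarith
        have := nonneg_of_mul_nonneg_right this hs
        linarith
      have hq0 : 0 ≤ q := by positivity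
      by_contra hneg
      push Not at hneg
      have h4 := key (min 1 (-H w / (2 * (q + 1)))) (lt_min one_pos (div_pos (by linarith) (by positivity)))
        (min_le_left _ _)
      have h5 : min 1 (-H w / (2 * (q + 1))) * q ≤ -H w / (2 * (q + 1)) * q :=
        mul_le_mul_of_nonneg_right (min_le_right _ _) hq0
      have h6 : -H w / (2 * (q + 1)) * q ≤ -H w / 2 := by
        rw [div_mul_eq_mul_div, div_le_div_iff₀ (by positivity) two_pos]
        nlinarith
      linarith
    rw [hGH]
    have : 1 / (2 * t) * ‖w‖ ^ 2 = ‖w‖ ^ 2 / (2 * t) := by ring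
    linarith
  have hL : LocallyLipschitz G := locallyLipschitzOn_univ.1 (hGc.locallyLipschitzOn isOpen_univ)
  have hcore := fun j => aux_core hGc hG0 (by positivity : 0 < 1 / (2 * t)) hδ hGa hL j
  have hgrad : ∀ w v, ⟪v, gradient G w⟫ = fderiv ℝ G w v := by
    intro w v
    rw [real_inner_comm, ← toDual_gradient, InnerProductSpace.toDual_apply_apply]
  have hgradj : ∀ w j, gradient G w j = fderiv ℝ G w (EuclideanSpace.single j 1) := by
    intro w j
    rw [← hgrad, EuclideanSpace.inner_single_left]; simp
  have hcont := hL.continuous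
  have hint : ∀ φ : EuclideanSpace ℝ (Fin n) → ℝ, ∫ w, φ w ∂ρ = c * ∫ w, φ w * Real.exp (-G w / δ) := by
    intro φ
    rw [hρ, integral_withDensity_eq_integral_toReal_smul (by fun_prop)
      (Filter.Eventually.of_forall fun w => ENNReal.ofReal_lt_top), ← integral_const_mul]
    refine integral_congr_ae (Filter.Eventually.of_forall fun w => ?_)
    simp only [smul_eq_mul]
    rw [ENNReal.toReal_ofReal (by positivity)]; ring
  have hnorm : c * ∫ w, Real.exp (-G w / δ) = 1 := by
    have := hint fun _ => 1
    simpa using this.symm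
  have hj : ∀ j : Fin n, ∫ w, w j * gradient G w j ∂ρ = δ := by
    intro j
    rw [hint]
    simp_rw [hgradj]
    rw [(hcore j).2]
    calc c * (δ * ∫ w, Real.exp (-G w / δ)) = δ * (c * ∫ w, Real.exp (-G w / δ)) := by ring
      _ = δ := by rw [hnorm, mul_one]
  refine ⟨aux_ae_diff hL, ?_, hj⟩
  rw [hint]
  have hsum : ∀ w, ⟪w, gradient G w⟫ * Real.exp (-G w / δ) =
      ∑ j, w j * fderiv ℝ G w (EuclideanSpace.single j 1) * Real.exp (-G w / δ) := by
    intro w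
    rw [← Finset.sum_mul]
    congr 1
    simp_rw [← hgradj]
    rw [PiLp.inner_apply]
    refine Finset.sum_congr rfl fun j _ => ?_
    simp only [RCLike.inner_apply, conj_trivial]
    ring
  simp_rw [hsum]
  rw [integral_finsetSum _ fun j _ => (hcore j).1]
  simp_rw [fun j => (hcore j).2]
  simp only [Finset.sum_const, Finset.card_univ, Fintype.card_fin, nsmul_eq_mul]
  calc c * (n * (δ * ∫ w, Real.exp (-G w / δ))) = n * δ * (c * ∫ w, Real.exp (-G w / δ)) := by ring
    _ = n * δ := by rw [hnorm, mul_one]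
end

section
/- Let f : ℝⁿ → ℝ be convex and L-Lipschitz, t > 0, δ > 0, x ∈ ℝⁿ. Let π be the density proportional to exp(−(f(z) + ‖z − x‖²/(2t))/δ), let π* be the density proportional to exp(−(2f(z) + ‖z − x‖²/(2t))/δ), and let μ = ∫ z π(z) dz. Then ∫ ‖z − μ‖² π*(z) dz ≤ n t δ + (2√(n t δ) + 3 L t)². -/
open MeasureTheory Real

lemma tsm_core (n : ℕ) (g : EuclideanSpace ℝ (Fin n) → ℝ)
    (hg : ConvexOn ℝ Set.univ g) (K : ℝ) (hK : 0 ≤ K)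
    (hLip : ∀ y z : EuclideanSpace ℝ (Fin n), |g y - g z| ≤ K * ‖y - z‖)
    (t δ : ℝ) (ht : 0 < t) (hδ : 0 < δ) (x : EuclideanSpace ℝ (Fin n))
    (c : ℝ) (hc : 0 < c) (q : EuclideanSpace ℝ (Fin n) → ℝ)
    (hq : q = fun z => c * Real.exp (-(g z + ‖z - x‖ ^ 2 / (2 * t)) / δ))
    (hq1 : ∫ z, q z = 1) :
    ∃ z0, ‖z0 - x‖ ≤ K * t ∧ Integrable q ∧ Integrable (fun z => ‖z - z0‖ ^ 2 * q z) ∧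
      ∫ z, ‖z - z0‖ ^ 2 * q z ≤ n * t * δ := by
  have hqi : Integrable q := by
    by_contra h
    rw [integral_undef h] at hq1
    norm_num at hq1
  have hgc : Continuous g := by
    have : LipschitzWith K.toNNReal g := by
      apply LipschitzWith.of_dist_le_mul
      intro y z
      rw [Real.dist_eq, dist_eq_norm, Real.coe_toNNReal _ hK]
      exact hLip y z
    exact this.continuous
  set V : EuclideanSpace ℝ (Fin n) → ℝ := fun z => g z + ‖z - x‖ ^ 2 / (2 * t) with hV
  have hVc : Continuous V := by fun_prop
  have hmin : ∃ z0, ∀ z, V z0 ≤ V z := by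
    apply hVc.exists_forall_le' x
    have hcp := (isCompact_closedBall x (2 * t * K)).compl_mem_cocompact
    filter_upwards [hcp] with z hz
    have hz' : 2 * t * K < ‖z - x‖ := by
      simpa [Metric.mem_closedBall, dist_eq_norm] using hz
    have h1 := (abs_le.1 (hLip x z)).2
    rw [norm_sub_rev x z] at h1
    have h2 : K * ‖z - x‖ ≤ ‖z - x‖ ^ 2 / (2 * t) := by
      rw [le_div_iff₀ (by positivity)]
      nlinarith [norm_nonneg (z - x)]
    simp only [hV, sub_self, norm_zero]
    simp
    linarith
  obtain ⟨z0, hz0⟩ := hmin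
  -- strong convexity
  have hsc : ∀ u : EuclideanSpace ℝ (Fin n), ∀ s : ℝ, 0 < s → s < 1 →
      V (z0 + s • u) ≤ (1 - s) * V z0 + s * V (z0 + u) - s * (1 - s) / (2 * t) * ‖u‖ ^ 2 := by
    intro u s hs0 hs1
    have h1 := hg.2 (Set.mem_univ z0) (Set.mem_univ (z0 + u)) (by linarith : 0 ≤ 1 - s) hs0.le
      (by ring)
    have e1 : (1 - s) • z0 + s • (z0 + u) = z0 + s • u := by module
    rw [e1] at h1
    simp only [smul_eq_mul] at h1
    have e2 : ‖z0 + s • u - x‖ ^ 2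
        = (1 - s) * ‖z0 - x‖ ^ 2 + s * ‖z0 + u - x‖ ^ 2 - s * (1 - s) * ‖u‖ ^ 2 := by
      have a1 : z0 + s • u - x = (z0 - x) + s • u := by module
      have a2 : z0 + u - x = (z0 - x) + u := by module
      rw [a1, a2, norm_add_sq_real, norm_add_sq_real, real_inner_smul_right, norm_smul,
        Real.norm_eq_abs, mul_pow, sq_abs]
      ring
    simp only [hV]
    rw [e2]
    have : ((1 - s) * ‖z0 - x‖ ^ 2 + s * ‖z0 + u - x‖ ^ 2 - s * (1 - s) * ‖u‖ ^ 2) / (2 * t)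
      = (1 - s) * (‖z0 - x‖ ^ 2 / (2 * t)) + s * (‖z0 + u - x‖ ^ 2 / (2 * t))
        - s * (1 - s) / (2 * t) * ‖u‖ ^ 2 := by ring
    rw [this]
    linarith
  have hne : (nhdsWithin (1:ℝ) (Set.Iio 1)).NeBot := inferInstance
  have hIoo : ∀ᶠ s in nhdsWithin (1:ℝ) (Set.Iio 1), 0 < s ∧ s < 1 := by
    filter_upwards [Ioo_mem_nhdsLT (zero_lt_one (α := ℝ))] with s hs using hs
  have hqg : ∀ u : EuclideanSpace ℝ (Fin n), V z0 + ‖u‖ ^ 2 / (2 * t) ≤ V (z0 + u) := by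
    intro u
    have key : ∀ s : ℝ, 0 < s → s < 1 → V z0 + s * (‖u‖ ^ 2 / (2 * t)) ≤ V (z0 + u) := by
      intro s h0 h1
      have h2 := hsc u (1 - s) (by linarith) (by linarith)
      have h3 := hz0 (z0 + (1 - s) • u)
      have h4 : (1 - s) * (V z0 + s * (‖u‖ ^ 2 / (2 * t))) ≤ (1 - s) * V (z0 + u) := by
        have : (1 - s) * (1 - (1 - s)) / (2 * t) * ‖u‖ ^ 2
          = (1 - s) * (s * (‖u‖ ^ 2 / (2 * t))) := by ring
        rw [this] at h2
        linarith
      exact le_of_mul_le_mul_left h4 (by linarith)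
    have hl : Filter.Tendsto (fun s : ℝ => V z0 + s * (‖u‖ ^ 2 / (2 * t)))
        (nhdsWithin (1:ℝ) (Set.Iio 1)) (nhds (V z0 + 1 * (‖u‖ ^ 2 / (2 * t)))) := by
      apply Filter.Tendsto.mono_left _ nhdsWithin_le_nhds
      apply Continuous.tendsto (f := fun s : ℝ => V z0 + s * (‖u‖ ^ 2 / (2 * t)))
      fun_prop
    rw [one_mul] at hl
    exact le_of_tendsto hl (hIoo.mono fun s hs => key s hs.1 hs.2)
  -- pointwise inequality
  have hpt : ∀ u : EuclideanSpace ℝ (Fin n), ∀ s : ℝ, 0 < s → s < 1 →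
      q (z0 + u) + (1 - s ^ 2) / (2 * t * δ) * (‖u‖ ^ 2 * q (z0 + u)) ≤ q (z0 + s • u) := by
    intro u s h0 h1
    have h2 := hsc u s h0 h1
    have h3 := hqg u
    have h4 : (1 - s ^ 2) * (‖u‖ ^ 2 / (2 * t)) ≤ V (z0 + u) - V (z0 + s • u) := by
      have : s * (1 - s) / (2 * t) * ‖u‖ ^ 2 = s * (1 - s) * (‖u‖ ^ 2 / (2 * t)) := by ring
      rw [this] at h2
      nlinarith
    have h5 : (1 - s ^ 2) / (2 * t * δ) * ‖u‖ ^ 2 ≤ (V (z0 + u) - V (z0 + s • u)) / δ := by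
      rw [le_div_iff₀ hδ]
      refine le_trans (le_of_eq ?_) h4
      field_simp
    have h6 := Real.add_one_le_exp ((V (z0 + u) - V (z0 + s • u)) / δ)
    have e1 : q (z0 + s • u) = q (z0 + u) * Real.exp ((V (z0 + u) - V (z0 + s • u)) / δ) := by
      rw [hq]
      simp only
      rw [mul_assoc, ← Real.exp_add]
      congr 2
      simp only [hV]
      ring
    have hq0 : 0 ≤ q (z0 + u) := by rw [hq]; positivity
    rw [e1]
    have := mul_le_mul_of_nonneg_left (le_trans (add_le_add_left h5 1) h6) hq0
    linarith
  have hqnn : ∀ z, 0 ≤ q z := by intro z; rw [hq]; positivity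
  have hqc : Continuous q := by rw [hq]; fun_prop
  have hqt : Integrable (fun u => q (z0 + u)) := hqi.comp_add_left z0
  have hqt1 : ∫ u, q (z0 + u) = 1 := by rw [integral_add_left_eq_self q z0, hq1]
  have hqs : ∀ s : ℝ, 0 < s → Integrable (fun u => q (z0 + s • u)) := by
    intro s hs
    exact (integrable_comp_smul_iff volume (fun u => q (z0 + u)) hs.ne').2 hqt
  have hqs1 : ∀ s : ℝ, 0 < s → ∫ u, q (z0 + s • u) = (s ^ n)⁻¹ := by
    intro s hs
    rw [Measure.integral_comp_smul volume (fun u => q (z0 + u)) s, hqt1]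
    simp [abs_of_pos hs]
  have hm : Integrable (fun u => ‖u‖ ^ 2 * q (z0 + u)) := by
    have h := (hqs (1/2) (by norm_num)).const_mul ((1 - (1/2:ℝ)^2) / (2 * t * δ))⁻¹
    refine h.mono' (by fun_prop) (Filter.Eventually.of_forall fun u => ?_)
    have h1 := hpt u (1/2) (by norm_num) (by norm_num)
    have h2 := hqnn (z0 + u)
    rw [Real.norm_of_nonneg (by positivity)]
    have hp : 0 < (1 - (1/2:ℝ)^2) / (2 * t * δ) := by
      apply div_pos (by norm_num) (by positivity)
    rw [le_inv_mul_iff₀ hp]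
    linarith
  have hM : ∀ s : ℝ, 0 < s → s < 1 →
      s ^ n * (1 + s) * ∫ u, ‖u‖ ^ 2 * q (z0 + u) ≤ 2 * (n * t * δ) := by
    intro s h0 h1
    have h2 := integral_mono (hqt.add (hm.const_mul ((1 - s ^ 2) / (2 * t * δ)))) (hqs s h0)
      (fun u => hpt u s h0 h1)
    simp only [Pi.add_apply] at h2
    rw [integral_add hqt (hm.const_mul _), integral_const_mul, hqs1 s h0, hqt1] at h2
    set M := ∫ u, ‖u‖ ^ 2 * q (z0 + u)
    have hb := one_add_mul_le_pow (show (-2:ℝ) ≤ s - 1 by linarith) n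
    have e : 1 + (s - 1) = s := by ring
    rw [e] at hb
    have hsn : 0 < s ^ n := by positivity
    have h3 : s ^ n * (1 + (1 - s ^ 2) / (2 * t * δ) * M) ≤ 1 := by
      have := mul_le_mul_of_nonneg_left h2 hsn.le
      rwa [mul_inv_cancel₀ hsn.ne'] at this
    have h4 : (1 - s) * ((s ^ n * (1 + s) * M) / (2 * t * δ)) ≤ (1 - s) * n := by
      have : (1 - s) * ((s ^ n * (1 + s) * M) / (2 * t * δ))
        = s ^ n * ((1 - s ^ 2) / (2 * t * δ) * M) := by ring
      rw [this]
      linarith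
    have h5 := le_of_mul_le_mul_left h4 (by linarith)
    rw [div_le_iff₀ (by positivity)] at h5
    linarith
  have hfin : ∫ u, ‖u‖ ^ 2 * q (z0 + u) ≤ n * t * δ := by
    set M := ∫ u, ‖u‖ ^ 2 * q (z0 + u)
    have hl : Filter.Tendsto (fun s : ℝ => s ^ n * (1 + s) * M)
        (nhdsWithin (1:ℝ) (Set.Iio 1)) (nhds (1 ^ n * (1 + 1) * M)) := by
      apply Filter.Tendsto.mono_left _ nhdsWithin_le_nhds
      apply Continuous.tendsto (f := fun s : ℝ => s ^ n * (1 + s) * M)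
      fun_prop
    have := le_of_tendsto hl (hIoo.mono fun s hs => hM s hs.1 hs.2)
    rw [one_pow] at this
    linarith
  refine ⟨z0, ?_, hqi, ?_, ?_⟩
  · have h1 := hqg (x - z0)
    have h2 := (abs_le.1 (hLip x z0)).2
    rw [norm_sub_rev x z0] at h1 h2
    simp only [hV, add_sub_cancel, sub_self, norm_zero] at h1
    have h3 : ‖z0 - x‖ ^ 2 / (2 * t) + ‖z0 - x‖ ^ 2 / (2 * t) = ‖z0 - x‖ ^ 2 / t := by
      field_simp; ring
    have h4 : ‖z0 - x‖ ^ 2 / t ≤ K * ‖z0 - x‖ := by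
      rw [← h3]
      simp at h1
      linarith
    rw [div_le_iff₀ ht] at h4
    rcases (norm_nonneg (z0 - x)).eq_or_lt with h | h
    · rw [← h]; positivity
    · refine le_of_mul_le_mul_left ?_ h
      linarith
  · have := hm.comp_add_left (-z0)
    refine this.congr (Filter.Eventually.of_forall fun z => ?_)
    simp only [add_neg_cancel_left]
    rw [neg_add_eq_sub]
  · rw [← integral_add_left_eq_self _ z0]
    simpa using hfin




/-- **Second moment bound under the tilted density.** For convex `L`-Lipschitz `f`,
the tilted density `π* ∝ exp(−(2f(z) + ‖z − x‖²/(2t))/δ)` satisfies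
`∫ ‖z − μ‖² π* ≤ n t δ + (2√(n t δ) + 3 L t)²`, where `μ` is the mean of
`π ∝ exp(−(f(z) + ‖z − x‖²/(2t))/δ)`. -/
theorem tilted_second_moment_bound (n : ℕ) (f : EuclideanSpace ℝ (Fin n) → ℝ)
    (hf : ConvexOn ℝ Set.univ f) (L : ℝ)
    (hL : ∀ y z : EuclideanSpace ℝ (Fin n), |f y - f z| ≤ L * ‖y - z‖)
    (t δ : ℝ) (ht : 0 < t) (hδ : 0 < δ) (x : EuclideanSpace ℝ (Fin n))
    (c₁ c₂ : ℝ) (hc₁ : 0 < c₁) (hc₂ : 0 < c₂)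
    (pdf pistar : EuclideanSpace ℝ (Fin n) → ℝ)
    (hpdf : pdf = fun z => c₁ * Real.exp (-(f z + ‖z - x‖ ^ 2 / (2 * t)) / δ))
    (hps : pistar = fun z => c₂ * Real.exp (-(2 * f z + ‖z - x‖ ^ 2 / (2 * t)) / δ))
    (hpdf1 : ∫ z, pdf z = 1) (hps1 : ∫ z, pistar z = 1)
    (μ : EuclideanSpace ℝ (Fin n)) (hμ : μ = ∫ z, pdf z • z) :
    ∫ z, ‖z - μ‖ ^ 2 * pistar z
      ≤ n * t * δ + (2 * Real.sqrt (n * t * δ) + 3 * L * t) ^ 2 := by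
  rcases Nat.eq_zero_or_pos n with hn | hn
  · subst hn
    have h0 : ∀ z : EuclideanSpace ℝ (Fin 0), ‖z - μ‖ ^ 2 * pistar z = 0 := by
      intro z
      rw [Subsingleton.elim z μ]
      simp
    simp only [h0, integral_zero]
    positivity
  have hL0 : 0 ≤ L := by
    have h := hL (EuclideanSpace.single ⟨0, hn⟩ 1) 0
    simp at h
    exact le_trans (abs_nonneg _) h
  obtain ⟨z1, hz1, hpi, hpm, hpb⟩ :=
    tsm_core n f hf L hL0 hL t δ ht hδ x c₁ hc₁ pdf hpdf hpdf1
  obtain ⟨z2, hz2, hsi, hsm, hsb⟩ :=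
    tsm_core n (fun z => 2 * f z) (by simpa using hf.smul (zero_le_two (α := ℝ)))
      (2 * L) (by positivity) (by
        intro y z
        have e : 2 * f y - 2 * f z = 2 * (f y - f z) := by ring
        rw [e, abs_mul, abs_two, mul_assoc]
        exact mul_le_mul_of_nonneg_left (hL y z) zero_le_two)
      t δ ht hδ x c₂ hc₂ pistar hps hps1
  have hn' : (0:ℝ) < n := by exact_mod_cast hn
  set s := Real.sqrt (n * t * δ) with hs
  have hs0 : 0 < s := Real.sqrt_pos.2 (by positivity)
  have hss : s ^ 2 = n * t * δ := Real.sq_sqrt (by positivity)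
  rw [← hss] at hpb hsb ⊢
  have hp0 : ∀ z, 0 ≤ pdf z := by intro z; rw [hpdf]; positivity
  have hq0 : ∀ z, 0 ≤ pistar z := by intro z; rw [hps]; positivity
  have hpsi : Integrable (fun z => pdf z • (z - z1)) := by
    refine ((hpm.add hpi)).mono' ?_ (Filter.Eventually.of_forall fun z => ?_)
    · exact hpi.aestronglyMeasurable.smul (by fun_prop)
    · rw [norm_smul, Real.norm_of_nonneg (hp0 z)]
      simp only [Pi.add_apply]
      have := mul_nonneg (hp0 z) (sq_nonneg (‖z - z1‖ - 1))
      nlinarith [hp0 z, mul_nonneg (hp0 z) (norm_nonneg (z - z1))]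
  have hmean : μ - z1 = ∫ z, pdf z • (z - z1) := by
    have e : ∀ z, pdf z • z = pdf z • (z - z1) + pdf z • z1 := by
      intro z; rw [smul_sub]; abel
    rw [hμ]
    simp only [e]
    rw [integral_add hpsi (hpi.smul_const z1), integral_smul_const, hpdf1, one_smul]
    abel
  have hm1 : ‖μ - z1‖ ≤ s := by
    rw [hmean]
    have h1 : ‖∫ z, pdf z • (z - z1)‖
        ≤ ∫ z, ((2 * s)⁻¹ * (‖z - z1‖ ^ 2 * pdf z) + s / 2 * pdf z) := by
      apply norm_integral_le_of_norm_le ((hpm.const_mul _).add (hpi.const_mul _))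
      refine Filter.Eventually.of_forall fun z => ?_
      rw [norm_smul, Real.norm_of_nonneg (hp0 z)]
      have h2 : ‖z - z1‖ ≤ (2 * s)⁻¹ * ‖z - z1‖ ^ 2 + s / 2 := by
        have h3 : (2 * s)⁻¹ * ‖z - z1‖ ^ 2 + s / 2 - ‖z - z1‖
          = (2 * s)⁻¹ * (‖z - z1‖ - s) ^ 2 := by field_simp; ring
        have : 0 ≤ (2 * s)⁻¹ * (‖z - z1‖ - s) ^ 2 := by positivity
        linarith
      have := mul_le_mul_of_nonneg_left h2 (hp0 z)
      simp only [Pi.add_apply]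
      linarith
    rw [integral_add (hpm.const_mul _) (hpi.const_mul _), integral_const_mul,
      integral_const_mul, hpdf1] at h1
    have h4 : (2 * s)⁻¹ * ∫ z, ‖z - z1‖ ^ 2 * pdf z ≤ (2 * s)⁻¹ * s ^ 2 :=
      mul_le_mul_of_nonneg_left hpb (by positivity)
    have h5 : (2 * s)⁻¹ * s ^ 2 = s / 2 := by field_simp
    linarith
  have hd : ‖z2 - μ‖ ≤ s + 3 * L * t := by
    have e : z2 - μ = (z2 - x) - (z1 - x) - (μ - z1) := by abel
    rw [e]
    have a1 := norm_sub_le ((z2 - x) - (z1 - x)) (μ - z1)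
    have a2 := norm_sub_le (z2 - x) (z1 - x)
    linarith
  set d := s + 3 * L * t with hdd
  have hd0 : 0 < d := by positivity
  have hint : ∫ z, ‖z - μ‖ ^ 2 * pistar z
      ≤ ∫ z, ((1 + d / s) * (‖z - z2‖ ^ 2 * pistar z) + (d ^ 2 + d * s) * pistar z) := by
    apply integral_mono_of_nonneg
    · exact Filter.Eventually.of_forall fun z => mul_nonneg (by positivity) (hq0 z)
    · exact (hsm.const_mul _).add (hsi.const_mul _)
    · refine Filter.Eventually.of_forall fun z => ?_
      have h1 : ‖z - μ‖ ≤ ‖z - z2‖ + d := by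
        have e : z - μ = (z - z2) + (z2 - μ) := by abel
        rw [e]
        exact (norm_add_le _ _).trans (by linarith)
      have h2 : ‖z - μ‖ ^ 2 ≤ (‖z - z2‖ + d) ^ 2 := pow_le_pow_left₀ (norm_nonneg _) h1 2
      have h3 : (1 + d / s) * ‖z - z2‖ ^ 2 + (d ^ 2 + d * s) - (‖z - z2‖ + d) ^ 2
          = d / s * (‖z - z2‖ - s) ^ 2 := by field_simp; ring
      have h4 : 0 ≤ d / s * (‖z - z2‖ - s) ^ 2 := by positivity
      have h5 : ‖z - μ‖ ^ 2 ≤ (1 + d / s) * ‖z - z2‖ ^ 2 + (d ^ 2 + d * s) := by linarith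
      have := mul_le_mul_of_nonneg_right h5 (hq0 z)
      simp only
      linarith
  rw [integral_add (hsm.const_mul _) (hsi.const_mul _), integral_const_mul,
    integral_const_mul, hps1] at hint
  have h6 : (1 + d / s) * ∫ z, ‖z - z2‖ ^ 2 * pistar z ≤ (1 + d / s) * s ^ 2 :=
    mul_le_mul_of_nonneg_left hsb (by positivity)
  have h7 : (1 + d / s) * s ^ 2 = s ^ 2 + d * s := by field_simp
  have h8 : 2 * s + 3 * L * t = s + d := by rw [hdd]; ring
  rw [h8]
  nlinarith [sq_nonneg s]
end

section
/- Let f : ℝⁿ → ℝ be convex and L-Lipschitz, t > 0, δ > 0, x ∈ ℝⁿ. Let Z ~ N(x, tδ·Iₙ) and set w(z) = exp(−f(z)/δ). Then E[w(Z)²] / (E[w(Z)])² ≤ exp(2 L² t / δ). Equivalently, with q the density of N(x, tδ·Iₙ), π the density proportional to exp(−(f(z) + ‖z − x‖²/(2t))/δ), and r = π/q, one has ∫ r(z)² q(z) dz = ∫ r(z) π(z) dz ≤ exp(2 L² t / δ). -/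
open MeasureTheory Real
open scoped ENNReal

/-- One-dimensional Brunn-Minkowski. -/
lemma bm_one {A B C : Set ℝ} (hA : MeasurableSet A) (hB : MeasurableSet B)
    (hAn : A.Nonempty) (hBn : B.Nonempty) (hC : ∀ a ∈ A, ∀ b ∈ B, a + b ∈ C) :
    volume A + volume B ≤ volume C := by
  have key : ∀ K ⊆ A, IsCompact K → K.Nonempty → ∀ J ⊆ B, IsCompact J → J.Nonempty →
      volume K + volume J ≤ volume C := by
    intro K hKA hK hKn J hJB hJ hJn
    obtain ⟨k, hkK, hk⟩ := hK.exists_isGreatest hKn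
    obtain ⟨j, hjJ, hj⟩ := hJ.exists_isLeast hJn
    have e1 : volume ((fun x => j + x) '' K) = volume K := by
      rw [Set.image_add_left, measure_preimage_add]
    have e2 : volume ((fun x => k + x) '' J) = volume J := by
      rw [Set.image_add_left, measure_preimage_add]
    have m2 : MeasurableSet ((fun x => k + x) '' J) :=
      (hJ.image (by fun_prop)).measurableSet
    have hdisj : AEDisjoint volume ((fun x => j + x) '' K) ((fun x => k + x) '' J) := by
      have : ((fun x => j + x) '' K) ∩ ((fun x => k + x) '' J) ⊆ {j + k} := by
        rintro _ ⟨⟨a, ha, rfl⟩, ⟨b, hb, hab⟩⟩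
        have h1 := hk ha
        have h2 := hj hb
        simp only [Set.mem_singleton_iff] at *
        linarith
      exact measure_mono_null this (by simp)
    rw [← e1, ← e2, ← measure_union₀ m2.nullMeasurableSet hdisj]
    apply measure_mono
    rintro _ (⟨a, ha, rfl⟩ | ⟨b, hb, rfl⟩)
    · change j + a ∈ C
      rw [add_comm]; exact hC _ (hKA ha) _ (hJB hjJ)
    · exact hC _ (hKA hkK) _ (hJB hb)
  obtain ⟨a0, ha0⟩ := hAn
  obtain ⟨b0, hb0⟩ := hBn
  have key2 : ∀ K ⊆ A, IsCompact K → ∀ J ⊆ B, IsCompact J →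
      volume K + volume J ≤ volume C := by
    intro K hKA hK J hJB hJ
    refine le_trans (add_le_add (measure_mono (Set.subset_insert a0 K))
      (measure_mono (Set.subset_insert b0 J))) ?_
    exact key _ (Set.insert_subset ha0 hKA) (hK.insert a0) (Set.insert_nonempty _ _)
      _ (Set.insert_subset hb0 hJB) (hJ.insert b0) (Set.insert_nonempty _ _)
  rw [hA.measure_eq_iSup_isCompact, hB.measure_eq_iSup_isCompact]
  have ne : ∀ S : Set ℝ, ∃ K : Set ℝ, K ⊆ S ∧ IsCompact K := fun S => ⟨∅, by simp, by simp⟩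
  simp only [iSup_and']
  refine ENNReal.biSup_add_biSup_le' (p := fun K => K ⊆ A ∧ IsCompact K)
    (q := fun K => K ⊆ B ∧ IsCompact K) (ne A) (ne B) ?_
  rintro K ⟨h1, h2⟩ J ⟨h3, h4⟩
  exact key2 K h1 h2 J h3 h4

lemma pl_norm {A B H : ℝ → ℝ} (mA : Measurable A) (mB : Measurable B) (mH : Measurable H)
    (A0 : ∀ u, 0 ≤ A u) (B0 : ∀ u, 0 ≤ B u) (H0 : ∀ u, 0 ≤ H u)
    (A1 : ∀ u, A u ≤ 1) (B1 : ∀ u, B u ≤ 1)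
    (As : ∀ t < 1, ∃ u, t < A u) (Bs : ∀ t < 1, ∃ u, t < B u)
    (hh : ∀ u v, A u * B v ≤ H ((1 / 2 : ℝ) * (u + v)) ^ 2) :
    (∫⁻ u, ENNReal.ofReal (A u)) + (∫⁻ u, ENNReal.ofReal (B u))
      ≤ 2 * ∫⁻ u, ENNReal.ofReal (H u) := by
  rw [lintegral_eq_lintegral_meas_lt volume (Filter.Eventually.of_forall A0) mA.aemeasurable,
    lintegral_eq_lintegral_meas_lt volume (Filter.Eventually.of_forall B0) mB.aemeasurable,
    lintegral_eq_lintegral_meas_lt volume (Filter.Eventually.of_forall H0) mH.aemeasurable]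
  have anti : Antitone (fun t => volume {a : ℝ | t < A a}) :=
    fun s t hst => measure_mono (fun x hx => lt_of_le_of_lt hst hx)
  rw [← lintegral_add_left anti.measurable, ← lintegral_const_mul' _ _ (by simp)]
  refine setLIntegral_mono' measurableSet_Ioi ?_
  intro t ht
  have ht0 : 0 < t := ht
  rcases lt_or_ge t 1 with h1 | h1
  · have := bm_one (A := {a | t < A a}) (B := {a | t < B a})
      (C := (fun x => (1 / 2 : ℝ) * x) ⁻¹' {a | t < H a})
      (measurableSet_lt measurable_const mA) (measurableSet_lt measurable_const mB)
      (As t h1) (Bs t h1) (by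
        intro a ha b hb
        simp only [Set.mem_ofPred_eq, Set.mem_preimage] at *
        have := hh a b
        have h3 : t * t < A a * B b := by nlinarith
        nlinarith [H0 ((1 / 2 : ℝ) * (a + b))])
    refine this.trans ?_
    rw [Real.volume_preimage_mul_left (by norm_num)]
    norm_num
  · have e1 : {a | t < A a} = ∅ := by
      ext a; simpa using (A1 a).trans h1
    have e2 : {a | t < B a} = ∅ := by
      ext a; simpa using (B1 a).trans h1
    rw [e1, e2]; simp

lemma pl_bdd {A B H : ℝ → ℝ} (mA : Measurable A) (mB : Measurable B) (mH : Measurable H)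
    (A0 : ∀ u, 0 ≤ A u) (B0 : ∀ u, 0 ≤ B u) (H0 : ∀ u, 0 ≤ H u)
    (N : ℝ) (A1 : ∀ u, A u ≤ N) (B1 : ∀ u, B u ≤ N)
    (hh : ∀ u v, A u * B v ≤ H ((1 / 2 : ℝ) * (u + v)) ^ 2) :
    (∫⁻ u, ENNReal.ofReal (A u)) * (∫⁻ u, ENNReal.ofReal (B u))
      ≤ (∫⁻ u, ENNReal.ofReal (H u)) ^ 2 := by
  have bA : BddAbove (Set.range A) := ⟨N, by rintro _ ⟨u, rfl⟩; exact A1 u⟩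
  have bB : BddAbove (Set.range B) := ⟨N, by rintro _ ⟨u, rfl⟩; exact B1 u⟩
  by_cases zA : ∀ u, A u = 0
  · simp [zA]
  by_cases zB : ∀ u, B u = 0
  · simp [zB]
  push Not at zA zB
  obtain ⟨u0, hu0⟩ := zA
  obtain ⟨v0, hv0⟩ := zB
  set α := ⨆ u, A u with hα
  set β := ⨆ u, B u with hβ
  have leA : ∀ u, A u ≤ α := fun u => le_ciSup bA u
  have leB : ∀ u, B u ≤ β := fun u => le_ciSup bB u
  have α0 : 0 < α := lt_of_lt_of_le (lt_of_le_of_ne (A0 u0) hu0.symm) (leA u0)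
  have β0 : 0 < β := lt_of_lt_of_le (lt_of_le_of_ne (B0 v0) hv0.symm) (leB v0)
  set γ := √(α * β) with hγ
  have γ0 : 0 < γ := by positivity
  have γ2 : γ ^ 2 = α * β := Real.sq_sqrt (by positivity)
  have main := pl_norm (A := fun u => α⁻¹ * A u) (B := fun u => β⁻¹ * B u)
    (H := fun u => γ⁻¹ * H u)
    (by fun_prop) (by fun_prop) (by fun_prop)
    (fun u => mul_nonneg (by positivity) (A0 u)) (fun u => mul_nonneg (by positivity) (B0 u))
    (fun u => mul_nonneg (by positivity) (H0 u))
    (fun u => by rw [inv_mul_le_iff₀ α0]; simpa using leA u)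
    (fun u => by rw [inv_mul_le_iff₀ β0]; simpa using leB u)
    (fun t ht => by
      obtain ⟨u, hu⟩ := exists_lt_of_lt_ciSup (f := A) (show α * t < α by nlinarith)
      exact ⟨u, by rwa [lt_inv_mul_iff₀ α0]⟩)
    (fun t ht => by
      obtain ⟨u, hu⟩ := exists_lt_of_lt_ciSup (f := B) (show β * t < β by nlinarith)
      exact ⟨u, by rwa [lt_inv_mul_iff₀ β0]⟩)
    (fun u v => by
      have := hh u v
      calc α⁻¹ * A u * (β⁻¹ * B v) = (γ ^ 2)⁻¹ * (A u * B v) := by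
            rw [γ2, mul_inv]; ring
        _ ≤ (γ ^ 2)⁻¹ * H ((1 / 2 : ℝ) * (u + v)) ^ 2 := by gcongr
        _ = _ := by rw [mul_pow, inv_pow])
  have sc : ∀ (c : ℝ) (F : ℝ → ℝ), 0 < c →
      ∫⁻ u, ENNReal.ofReal (c⁻¹ * F u) = ENNReal.ofReal c⁻¹ * ∫⁻ u, ENNReal.ofReal (F u) := by
    intro c F hc
    rw [← lintegral_const_mul' _ _ (by simp)]
    congr 1; ext u; rw [ENNReal.ofReal_mul (by positivity)]
  rw [sc _ _ α0, sc _ _ β0, sc _ _ γ0] at main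
  set I := ∫⁻ u, ENNReal.ofReal (A u)
  set J := ∫⁻ u, ENNReal.ofReal (B u)
  set K := ∫⁻ u, ENNReal.ofReal (H u)
  by_cases hK : K = ∞
  · rw [hK]; simp
  have fin : 2 * (ENNReal.ofReal γ⁻¹ * K) < ∞ := by
    refine ENNReal.mul_lt_top (by simp) (ENNReal.mul_lt_top (by simp) (lt_top_iff_ne_top.2 hK))
  have hI : I ≠ ∞ := by
    intro h
    rw [h, ENNReal.mul_top (by simpa using α0), top_add] at main
    exact absurd main (not_le.2 fin)
  have hJ : J ≠ ∞ := by
    intro h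
    rw [h, ENNReal.mul_top (by simpa using β0), add_top] at main
    exact absurd main (not_le.2 fin)
  clear_value I J K
  lift I to NNReal using hI
  lift J to NNReal using hJ
  lift K to NNReal using hK
  have main' := ENNReal.toReal_mono fin.ne main
  rw [ENNReal.toReal_add (ENNReal.mul_ne_top (by simp) (by simp))
    (ENNReal.mul_ne_top (by simp) (by simp))] at main'
  simp only [ENNReal.toReal_mul, ENNReal.toReal_ofReal (inv_nonneg.2 α0.le),
    ENNReal.toReal_ofReal (inv_nonneg.2 β0.le), ENNReal.toReal_ofReal (inv_nonneg.2 γ0.le),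
    ENNReal.coe_toReal, ENNReal.toReal_ofNat] at main'
  have fin2 : (I : ℝ) * J ≤ (K : ℝ) ^ 2 := by
    have i0 := I.coe_nonneg
    have j0 := J.coe_nonneg
    have k0 := K.coe_nonneg
    have x0 : 0 ≤ α⁻¹ * (I : ℝ) := by positivity
    have y0 : 0 ≤ β⁻¹ * (J : ℝ) := by positivity
    have z0 : 0 ≤ γ⁻¹ * (K : ℝ) := by positivity
    have e : (α⁻¹ * (I : ℝ)) * (β⁻¹ * (J : ℝ)) ≤ (γ⁻¹ * (K : ℝ)) ^ 2 := by
      nlinarith [sq_nonneg (α⁻¹ * (I : ℝ) - β⁻¹ * (J : ℝ))]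
    have e2 : (α⁻¹ * (I : ℝ)) * (β⁻¹ * (J : ℝ)) = (γ ^ 2)⁻¹ * (I * J) := by
      rw [γ2, mul_inv]; ring
    rw [e2, mul_pow, inv_pow] at e
    exact le_of_mul_le_mul_left e (by positivity)
  exact_mod_cast fin2

/-- Prékopa-Leindler property with parameter 1/2. -/
def PLProp (E : Type) [AddCommGroup E] [Module ℝ E] [MeasureSpace E] : Prop :=
  ∀ a b h : E → ℝ≥0∞, Measurable a → Measurable b → Measurable h →
    (∀ u v, a u * b v ≤ h ((1 / 2 : ℝ) • (u + v)) ^ 2) →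
    (∫⁻ u, a u) * (∫⁻ u, b u) ≤ (∫⁻ u, h u) ^ 2

lemma pl_real : PLProp ℝ := by
  intro a b h ma mb mh hh
  have tr : ∀ F : ℝ → ℝ≥0∞, Measurable F →
      ∫⁻ u, F u = ⨆ N : ℕ, ∫⁻ u, min (F u) (N : ℝ≥0∞) := by
    intro F mF
    rw [← lintegral_iSup (fun n => mF.min measurable_const)
      (fun m n hmn u => min_le_min le_rfl (by exact_mod_cast hmn))]
    congr 1; ext u
    change F u = ⨆ N : ℕ, F u ⊓ (N : ℝ≥0∞)
    rw [← inf_iSup_eq, ENNReal.iSup_natCast, inf_top_eq]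
  have step : ∀ N : ℕ, (∫⁻ u, min (a u) (N : ℝ≥0∞)) * (∫⁻ u, min (b u) (N : ℝ≥0∞))
      ≤ (∫⁻ u, h u) ^ 2 := by
    intro N
    have ft : ∀ (F : ℝ → ℝ≥0∞) u, min (F u) (N : ℝ≥0∞) ≠ ∞ := fun F u =>
      ne_top_of_le_ne_top (by simp) (min_le_right _ _)
    have le : ∀ (F : ℝ → ℝ≥0∞) u, (min (F u) (N : ℝ≥0∞)).toReal ≤ N := fun F u => by
      have := ENNReal.toReal_mono (by simp) (min_le_right (F u) (N : ℝ≥0∞))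
      simpa using this
    have := pl_bdd (A := fun u => (min (a u) (N : ℝ≥0∞)).toReal)
      (B := fun u => (min (b u) (N : ℝ≥0∞)).toReal)
      (H := fun u => (min (h u) (N : ℝ≥0∞)).toReal)
      (by fun_prop) (by fun_prop) (by fun_prop)
      (fun _ => ENNReal.toReal_nonneg) (fun _ => ENNReal.toReal_nonneg)
      (fun _ => ENNReal.toReal_nonneg) N (le a) (le b) (by
        intro u v
        rw [← ENNReal.toReal_mul, ← ENNReal.toReal_pow]
        refine ENNReal.toReal_mono (ENNReal.pow_ne_top (ft h _)) ?_
        rcases le_total (h ((1 / 2 : ℝ) * (u + v))) (N : ℝ≥0∞) with h1 | h1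
        · rw [min_eq_left h1]
          exact (mul_le_mul' (min_le_left _ _) (min_le_left _ _)).trans (hh u v)
        · rw [min_eq_right h1, sq]
          exact mul_le_mul' (min_le_right _ _) (min_le_right _ _))
    simp only [ENNReal.ofReal_toReal (ft _ _)] at this
    refine this.trans ?_
    gcongr
    exact min_le_left _ _
  rw [tr a ma, tr b mb]
  have mono : ∀ F : ℝ → ℝ≥0∞, Monotone (fun N : ℕ => ∫⁻ u, min (F u) (N : ℝ≥0∞)) :=
    fun F m n hmn => lintegral_mono fun u => min_le_min le_rfl (by exact_mod_cast hmn)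
  rw [ENNReal.iSup_mul]
  refine iSup_le fun m => ?_
  rw [ENNReal.mul_iSup]
  refine iSup_le fun n => ?_
  exact (mul_le_mul' (mono a (le_max_left m n)) (mono b (le_max_right m n))).trans (step (max m n))

lemma pl_prod {E F : Type} [AddCommGroup E] [Module ℝ E] [MeasureSpace E]
    [AddCommGroup F] [Module ℝ F] [MeasureSpace F]
    [SFinite (volume : Measure E)] [SFinite (volume : Measure F)]
    (hE : PLProp E) (hF : PLProp F) : PLProp (E × F) := by
  intro a b h ma mb mh hh
  rw [Measure.volume_eq_prod, lintegral_prod _ ma.aemeasurable, lintegral_prod _ mb.aemeasurable,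
    lintegral_prod _ mh.aemeasurable]
  refine hE _ _ _ ma.lintegral_prod_right' mb.lintegral_prod_right' mh.lintegral_prod_right' ?_
  intro u v
  refine hF _ _ _ (by fun_prop) (by fun_prop) (by fun_prop) ?_
  intro u' v'
  exact hh (u, u') (v, v')

lemma pl_transfer {E F : Type} [AddCommGroup E] [Module ℝ E] [MeasureSpace E]
    [AddCommGroup F] [Module ℝ F] [MeasureSpace F] (e : E → F)
    (he : MeasurePreserving e) (hlin : ∀ u v, e ((1 / 2 : ℝ) • (u + v)) = (1 / 2 : ℝ) • (e u + e v))
    (hE : PLProp E) : PLProp F := by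
  intro a b h ma mb mh hh
  rw [← he.lintegral_comp ma, ← he.lintegral_comp mb, ← he.lintegral_comp mh]
  refine hE _ _ _ (ma.comp he.measurable) (mb.comp he.measurable) (mh.comp he.measurable) ?_
  intro u v
  rw [hlin]
  exact hh _ _

lemma pl_pi (n : ℕ) : PLProp (Fin n → ℝ) := by
  induction n with
  | zero =>
    intro a b h ma mb mh hh
    have : ∀ F : (Fin 0 → ℝ) → ℝ≥0∞, ∫⁻ u, F u = F default := by
      intro F
      rw [lintegral_unique]
      simp [volume_pi]
      exact congrArg F (Subsingleton.elim _ _)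
    rw [this, this, this]
    convert hh default default
  | succ n ih =>
    refine pl_transfer (E := ℝ × (Fin n → ℝ))
      (MeasurableEquiv.piFinSuccAbove (fun _ => ℝ) (0 : Fin (n + 1))).symm
      (volume_preserving_piFinSuccAbove (fun _ => ℝ) (0 : Fin (n + 1))).symm ?_ (pl_prod pl_real ih)
    intro u v
    rw [MeasurableEquiv.symm_apply_eq]
    have := (MeasurableEquiv.piFinSuccAbove (fun _ => ℝ) (0 : Fin (n + 1))).apply_symm_apply u
    have := (MeasurableEquiv.piFinSuccAbove (fun _ => ℝ) (0 : Fin (n + 1))).apply_symm_apply v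
    ext i
    · simp [MeasurableEquiv.piFinSuccAbove]
    · simp [MeasurableEquiv.piFinSuccAbove, Fin.tail]

lemma pl_euclid (n : ℕ) : PLProp (EuclideanSpace ℝ (Fin n)) :=
  pl_transfer (WithLp.toLp 2) (PiLp.volume_preserving_toLp (Fin n)) (fun u v => by simp) (pl_pi n)

lemma gauss_lintegral (n : ℕ) (s : ℝ) (hs : 0 < s) (x : EuclideanSpace ℝ (Fin n)) :
    ∫⁻ z, ENNReal.ofReal ((2 * π * s) ^ (-(n : ℝ) / 2) * Real.exp (-‖z - x‖ ^ 2 / (2 * s))) = 1 := by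
  have h1 : ∫ z : EuclideanSpace ℝ (Fin n),
      (2 * π * s) ^ (-(n : ℝ) / 2) * Real.exp (-‖z - x‖ ^ 2 / (2 * s)) = 1 := by
    rw [integral_sub_right_eq_self (fun z : EuclideanSpace ℝ (Fin n) =>
      (2 * π * s) ^ (-(n : ℝ) / 2) * Real.exp (-‖z‖ ^ 2 / (2 * s))) x, integral_const_mul]
    have := GaussianFourier.integral_rexp_neg_mul_sq_norm (V := EuclideanSpace ℝ (Fin n))
      (b := (2 * s)⁻¹) (by positivity)
    rw [show (fun z : EuclideanSpace ℝ (Fin n) => Real.exp (-‖z‖ ^ 2 / (2 * s))) =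
      fun z => Real.exp (-(2 * s)⁻¹ * ‖z‖ ^ 2) from by ext z; congr 1; field_simp, this]
    rw [show π / (2 * s)⁻¹ = 2 * π * s by field_simp, finrank_euclideanSpace_fin,
      ← Real.rpow_add (by positivity)]
    rw [show -(n : ℝ) / 2 + n / 2 = 0 by ring, Real.rpow_zero]
  have h2 : Integrable (fun z : EuclideanSpace ℝ (Fin n) =>
      (2 * π * s) ^ (-(n : ℝ) / 2) * Real.exp (-‖z - x‖ ^ 2 / (2 * s))) := by
    by_contra h
    rw [integral_undef h] at h1
    exact zero_ne_one h1
  rw [← ofReal_integral_eq_lintegral_ofReal h2 (Filter.Eventually.of_forall fun z => by positivity),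
    h1, ENNReal.ofReal_one]

/-- **Bound on the importance-weight second moment (Lemma "Bound on E_q[r(Z)²]").**
For convex `L`-Lipschitz `f` and `Z ~ N(x, tδ Iₙ)` with `w(z) = exp(−f(z)/δ)`,
`E[w(Z)²] / (E[w(Z)])² ≤ exp(2 L² t / δ)`. -/
theorem importance_weight_ratio_bound (n : ℕ) (f : EuclideanSpace ℝ (Fin n) → ℝ)
    (hf : ConvexOn ℝ Set.univ f) (L : ℝ)
    (hL : ∀ y z : EuclideanSpace ℝ (Fin n), |f y - f z| ≤ L * ‖y - z‖)
    (t δ : ℝ) (ht : 0 < t) (hδ : 0 < δ) (x : EuclideanSpace ℝ (Fin n))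
    (q : EuclideanSpace ℝ (Fin n) → ℝ)
    (hq : q = fun z => (2 * π * (t * δ)) ^ (-(n : ℝ) / 2) *
      Real.exp (-‖z - x‖ ^ 2 / (2 * (t * δ)))) :
    (∫ z, Real.exp (-f z / δ) ^ 2 * q z) / (∫ z, Real.exp (-f z / δ) * q z) ^ 2
      ≤ Real.exp (2 * L ^ 2 * t / δ) := by
  have fc : Continuous f := by
    have : LipschitzWith (Real.toNNReal L) f := LipschitzWith.of_dist_le_mul fun y z => by
      rw [Real.dist_eq, dist_eq_norm]
      exact (hL y z).trans (mul_le_mul_of_nonneg_right (Real.le_coe_toNNReal L) (norm_nonneg _))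
    exact this.continuous
  have qc : Continuous q := by rw [hq]; fun_prop
  have q0 : ∀ z, 0 ≤ q z := fun z => by rw [hq]; positivity
  have q1 : ∫⁻ z, ENNReal.ofReal (q z) = 1 := by
    rw [hq]; exact gauss_lintegral n (t * δ) (by positivity) x
  set s := L ^ 2 * t / δ with hs
  have s0 : 0 ≤ s := by positivity
  have pw : ∀ u v, (Real.exp (-f u / δ) ^ 2 * q u) * q v ≤
      (Real.exp (s / 2) * (Real.exp (-f ((1 / 2 : ℝ) • (u + v)) / δ) * q ((1 / 2 : ℝ) • (u + v)))) ^ 2 := by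
    intro u v
    set m := (1 / 2 : ℝ) • (u + v) with hm
    set d := ‖u - v‖ with hd
    have hmu : f m ≤ f u + L * d / 2 := by
      have h1 := (le_abs_self _).trans (hL m u)
      have h2 : ‖m - u‖ = d / 2 := by
        rw [show m - u = (-(1 / 2) : ℝ) • (u - v) by rw [hm]; module, norm_smul]
        norm_num; ring
      rw [h2] at h1; linarith
    have par : ‖u - x‖ ^ 2 + ‖v - x‖ ^ 2 = 2 * ‖m - x‖ ^ 2 + d ^ 2 / 2 := by
      have h1 := parallelogram_law_with_norm ℝ (u - x) (v - x)
      rw [show (u - x) + (v - x) = (2 : ℝ) • (m - x) by rw [hm]; module,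
        show (u - x) - (v - x) = u - v by abel, norm_smul, ← hd] at h1
      norm_num at h1
      nlinarith
    set c := (2 * π * (t * δ)) ^ (-(n : ℝ) / 2) with hc
    have hqz : ∀ z, q z = c * Real.exp (-‖z - x‖ ^ 2 / (2 * (t * δ))) := fun z => by rw [hq]
    rw [hqz, hqz, hqz]
    have c0 : 0 ≤ c := by positivity
    have hexp : (-f u / δ) + (-f u / δ) + (-‖u - x‖ ^ 2 / (2 * (t * δ)))
        + (-‖v - x‖ ^ 2 / (2 * (t * δ))) ≤
        2 * (s / 2 + (-f m / δ + -‖m - x‖ ^ 2 / (2 * (t * δ)))) := by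
      have e : 2 * (s / 2 + (-f m / δ + -‖m - x‖ ^ 2 / (2 * (t * δ)))) -
          ((-f u / δ) + (-f u / δ) + (-‖u - x‖ ^ 2 / (2 * (t * δ)))
          + (-‖v - x‖ ^ 2 / (2 * (t * δ)))) =
          2 * (f u + L * d / 2 - f m) / δ + (d / 2 - L * t) ^ 2 / (t * δ)
          + (‖u - x‖ ^ 2 + ‖v - x‖ ^ 2 - (2 * ‖m - x‖ ^ 2 + d ^ 2 / 2)) / (2 * (t * δ)) := by
        rw [hs]; field_simp; ring
      rw [par, sub_self, zero_div, add_zero] at e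
      have p1 : 0 ≤ 2 * (f u + L * d / 2 - f m) / δ := by
        apply div_nonneg _ hδ.le; linarith
      have p2 : 0 ≤ (d / 2 - L * t) ^ 2 / (t * δ) := by positivity
      linarith
    have e1 := Real.exp_le_exp.2 hexp
    calc _ = c ^ 2 * Real.exp ((-f u / δ) + (-f u / δ) + (-‖u - x‖ ^ 2 / (2 * (t * δ)))
        + (-‖v - x‖ ^ 2 / (2 * (t * δ)))) := by
          rw [Real.exp_add, Real.exp_add, Real.exp_add]; ring
      _ ≤ c ^ 2 * Real.exp (2 * (s / 2 + (-f m / δ + -‖m - x‖ ^ 2 / (2 * (t * δ))))) := by gcongr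
      _ = _ := by
          rw [two_mul, Real.exp_add, Real.exp_add, Real.exp_add]; ring
  have main := pl_euclid n (fun u => ENNReal.ofReal (Real.exp (-f u / δ) ^ 2 * q u))
    (fun u => ENNReal.ofReal (q u))
    (fun u => ENNReal.ofReal (Real.exp (s / 2) * (Real.exp (-f u / δ) * q u)))
    (ENNReal.measurable_ofReal.comp (Continuous.measurable (by fun_prop))) (ENNReal.measurable_ofReal.comp (Continuous.measurable (by fun_prop)))
    (ENNReal.measurable_ofReal.comp (Continuous.measurable (by fun_prop))) (by
      intro u v
      have h1 := q0 u
      have h2 := q0 ((1 / 2 : ℝ) • (u + v))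
      rw [← ENNReal.ofReal_mul (by positivity), ← ENNReal.ofReal_pow (by positivity)]
      exact ENNReal.ofReal_le_ofReal (pw u v))
  rw [q1, mul_one] at main
  have hscale : ∫⁻ u, ENNReal.ofReal (Real.exp (s / 2) * (Real.exp (-f u / δ) * q u)) =
      ENNReal.ofReal (Real.exp (s / 2)) * ∫⁻ u, ENNReal.ofReal (Real.exp (-f u / δ) * q u) := by
    rw [← lintegral_const_mul' _ _ (by simp)]
    congr 1; ext u; rw [ENNReal.ofReal_mul (by positivity)]
  rw [hscale] at main
  have i1 : ∫ z, Real.exp (-f z / δ) ^ 2 * q z =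
      (∫⁻ u, ENNReal.ofReal (Real.exp (-f u / δ) ^ 2 * q u)).toReal :=
    integral_eq_lintegral_of_nonneg_ae
      (Filter.Eventually.of_forall fun z => mul_nonneg (by positivity) (q0 z))
      (Continuous.aestronglyMeasurable (by fun_prop))
  have i2 : ∫ z, Real.exp (-f z / δ) * q z =
      (∫⁻ u, ENNReal.ofReal (Real.exp (-f u / δ) * q u)).toReal :=
    integral_eq_lintegral_of_nonneg_ae
      (Filter.Eventually.of_forall fun z => mul_nonneg (by positivity) (q0 z))
      (Continuous.aestronglyMeasurable (by fun_prop))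
  rw [i1, i2]
  generalize (∫⁻ u, ENNReal.ofReal (Real.exp (-f u / δ) ^ 2 * q u)) = I at *
  generalize (∫⁻ u, ENNReal.ofReal (Real.exp (-f u / δ) * q u)) = J at *
  by_cases hJ : J = ∞
  · rw [hJ]; simp; positivity
  have m2 := ENNReal.toReal_mono (ENNReal.pow_ne_top (ENNReal.mul_ne_top (by simp) hJ)) main
  rw [ENNReal.toReal_pow, ENNReal.toReal_mul, ENNReal.toReal_ofReal (by positivity), mul_pow,
    ← Real.exp_nat_mul] at m2
  refine div_le_of_le_mul₀ (by positivity) (by positivity) (m2.trans ?_)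
  gcongr
  push_cast
  have : 2 * L ^ 2 * t / δ = 2 * s := by rw [hs]; ring
  rw [this]; linarith
end
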